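/- Let M = {F = 0} be a germ of an irreducible singular real-analytic Levi-flat hypersurface at 0 ∈ ℂⁿ, n ≥ 3, with F(z) = Re(z₁ ⋯ zₙ) + H(z, z̄), where H(z, z̄) = O(|z|^{n+1}) and H(z, z̄) = conj(H(z̄, z)). Suppose Sing(M_ℂ) equals the union over all 1 ≤ i < j ≤ n and 1 ≤ k < ℓ ≤ n of V_{ijkℓ} = {(z,w) ∈ ℂⁿ × ℂⁿ : z_i = z_j = w_k = w_ℓ = 0}, and that Sing(M_ℂ) is contained in the closure of Sing(L_ℂ). Then the complexified Levi foliation L_ℂ admits a non-constant holomorphic first integral: there exists a germ of holomorphic function h at 0 ∈ ℂ^{2n}, non-constant along M_ℂ, such that for every p ∈ M*_ℂ the 2-form dh(p) ∧ α(p) vanishes on pairs of vectors in T_p M_ℂ. -/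

import Mathlib

open Filter Topology

/-- Wirtinger derivative ∂/∂z_j of a (complex-valued) function at `p`:
`(1/2)(∂F/∂x_j − i ∂F/∂y_j)`. -/
noncomputable def wirtZ {n : ℕ} (F : (Fin n → ℂ) → ℂ) (j : Fin n) (p : Fin n → ℂ) : ℂ :=
  (fderiv ℝ F p (Pi.single j 1) - Complex.I * fderiv ℝ F p (Pi.single j Complex.I)) / 2

/-- Wirtinger derivative ∂/∂z̄_j of a (complex-valued) function at `p`:
`(1/2)(∂F/∂x_j + i ∂F/∂y_j)`. -/
noncomputable def wirtZbar {n : ℕ} (F : (Fin n → ℂ) → ℂ) (j : Fin n) (p : Fin n → ℂ) : ℂ :=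
  (fderiv ℝ F p (Pi.single j 1) + Complex.I * fderiv ℝ F p (Pi.single j Complex.I)) / 2

/-- The germ `M = {F = 0}` at `0` is Levi-flat: for every point `p` of `M* = M \ Sing(M)`
near `0` and every `v` with `Σ_j F_{z_j}(p) v_j = 0` one has
`Σ_{i,j} F_{z_i z̄_j}(p) v_i conj(v_j) = 0`. -/
def LeviFlatGerm {n : ℕ} (F : (Fin n → ℂ) → ℝ) : Prop :=
  ∀ᶠ p in 𝓝 (0 : Fin n → ℂ), F p = 0 → fderiv ℝ F p ≠ 0 →
    ∀ v : Fin n → ℂ,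
      (∑ j, wirtZ (fun z => ((F z : ℝ) : ℂ)) j p * v j) = 0 →
      (∑ i, ∑ j, wirtZbar (wirtZ (fun z => ((F z : ℝ) : ℂ)) i) j p * v i * (starRingEnd ℂ) (v j)) = 0

/-- `F` is irreducible in the ring of germs at `0` of real-valued real-analytic functions:
in any factorization `F = g·h` one of the factors is a unit (i.e. does not vanish at `0`). -/
def IrreducibleRGerm {n : ℕ} (F : (Fin n → ℂ) → ℝ) : Prop :=
  ∀ g h : (Fin n → ℂ) → ℝ, AnalyticAt ℝ g 0 → AnalyticAt ℝ h 0 →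
    (∀ᶠ z in 𝓝 (0 : Fin n → ℂ), F z = g z * h z) → g 0 ≠ 0 ∨ h 0 ≠ 0

/-- `φ` is a germ of biholomorphism `(ℂⁿ,0) → (ℂⁿ,0)` with local inverse `ι`. -/
def IsGermBiholo {n : ℕ} (φ ι : (Fin n → ℂ) → (Fin n → ℂ)) : Prop :=
  AnalyticAt ℂ φ 0 ∧ AnalyticAt ℂ ι 0 ∧ φ 0 = 0 ∧ ι 0 = 0 ∧
  (∀ᶠ z in 𝓝 (0 : Fin n → ℂ), ι (φ z) = z) ∧ (∀ᶠ z in 𝓝 (0 : Fin n → ℂ), φ (ι z) = z)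

/-- `φ` is volume-preserving (isochore): the determinant of its complex Jacobian is
identically `1` near `0`. -/
def IsVolumePreserving {n : ℕ} (φ : (Fin n → ℂ) → (Fin n → ℂ)) : Prop :=
  ∀ᶠ z in 𝓝 (0 : Fin n → ℂ), LinearMap.det ((fderiv ℂ φ z).toLinearMap) = 1

/-- `ψ` is a germ of automorphism of `(ℂ,0)`. -/
def IsGermAuto (ψ : ℂ → ℂ) : Prop :=
  AnalyticAt ℂ ψ 0 ∧ ψ 0 = 0 ∧ deriv ψ 0 ≠ 0

/-- `FC` is the complexification of `F`: the (unique) germ of holomorphic function at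
`0 ∈ ℂⁿ × ℂⁿ` such that `FC (z, z̄) = F z` near `0`. -/
def IsComplexification {n : ℕ} (F : (Fin n → ℂ) → ℝ)
    (FC : ((Fin n → ℂ) × (Fin n → ℂ)) → ℂ) : Prop :=
  AnalyticAt ℂ FC 0 ∧ ∀ᶠ z in 𝓝 (0 : Fin n → ℂ), FC (z, star z) = ((F z : ℝ) : ℂ)

/-- The singular set `Sing(M_ℂ) = {F_ℂ = 0} ∩ {dF_ℂ = 0}` of the complexification. -/
def singMC {n : ℕ} (FC : ((Fin n → ℂ) × (Fin n → ℂ)) → ℂ) :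
    Set ((Fin n → ℂ) × (Fin n → ℂ)) :=
  {p | FC p = 0 ∧ fderiv ℂ FC p = 0}

/-- The singular set of the complexified Levi foliation `L_ℂ`: points of
`M*_ℂ` at which `α = Σ_j (∂F_ℂ/∂z_j) dz_j` vanishes on `T_p M_ℂ = ker dF_ℂ(p)`.
Note that `α(p)(v) = dF_ℂ(p)(v₁, 0)`. -/
def singLC {n : ℕ} (FC : ((Fin n → ℂ) × (Fin n → ℂ)) → ℂ) :
    Set ((Fin n → ℂ) × (Fin n → ℂ)) :=
  {p | FC p = 0 ∧ fderiv ℂ FC p ≠ 0 ∧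
    ∀ v : (Fin n → ℂ) × (Fin n → ℂ), fderiv ℂ FC p v = 0 → fderiv ℂ FC p (v.1, 0) = 0}

/-!
For small `s > 0` the function `g(z, w) = 2 s⁻ⁿ F_ℂ(sz, sw)` is a small perturbation of
`z₁⋯zₙ + w₁⋯wₙ` on a large ball. The leaves of the Levi foliation should be the slices
`{h(z) = c}` of the hypersurface `{g = 0}`. To find `h`, solve `g(b, (u, x)) = 0` for the first
coordinate `u = κ(b, x)` of `w`, where `x` runs over a polyannulus. The Levi condition is known at
the real points `w = z̄` of the hypersurface; these are maximal totally real, so it extends to all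
points `(b, (κ(b, x), x))` with `b₀` near `i`. There it says that the ratios of the components of
`∂_z g` do not change with `x`. At `x = (1, …, 1)` they are, by implicit differentiation, the ratios
of the components of `dh` for `h(b) = κ(b, (1, …, 1))`, so `dh ∧ ∂_z g = 0` on an open part of the
hypersurface.

The zeros near the origin lie outside the polyannulus. To reach them, restrict `g` to the lines
`t ↦ (b, c + t(1, …, 1))`. For `b` in a fixed ball and `c` small, no zero lies on `|t| = 3`. For
`(b, c)` near `((i, 1, …, 1), 0)` the zeros with `|t| ≤ 3` are simple and lie in the annulus, since
`g` is close to `tⁿ + i`. Hence the coefficients of `dh ∧ ∂_z g` are divisible by `g` there, with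
quotient a Cauchy integral over `|t| = 3` that makes sense for all `(b, c)`. By analytic
continuation they vanish on every zero of `g`. Finally `dh ≠ 0` somewhere and `{F_ℂ = 0}` projects
onto a neighbourhood of `0` in the `z`-space, so `h` is not constant along the hypersurface.
-/

section GeneratingSubspace

lemma isBigO_pow_norm_of_le {E : Type*} [NormedAddCommGroup E] {l : Filter E}
    (hl : l ≤ 𝓝 0) {j k : ℕ} (hjk : j ≤ k) :
    (fun y : E => ‖y‖ ^ k) =O[l] fun y => ‖y‖ ^ j := by
  refine Asymptotics.IsBigO.of_bound 1 ?_
  filter_upwards [hl (Metric.ball_mem_nhds 0 one_pos)] with y hy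
  rw [one_mul, norm_pow, norm_pow, norm_norm]
  exact pow_le_pow_of_le_one (norm_nonneg _) (mem_ball_zero_iff.1 hy).le hjk

variable {E G : Type*} [NormedAddCommGroup E] [NormedSpace ℂ E] [NormedAddCommGroup G]
  [NormedSpace ℂ G] {S : Submodule ℝ E}

/-- A real subspace `S` of a complex vector space is *generating* if `S + iS` is the whole space.
Holomorphic germs are determined by their restriction to such a subspace. -/
def IsGenerating (S : Submodule ℝ E) : Prop :=
  ∀ v, ∃ a ∈ S, ∃ b ∈ S, a + Complex.I • b = v

lemma frequently_nhdsNE_zero_of_forall_real {P : ℂ → Prop} (hP : ∀ r : ℝ, P r) :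
    ∃ᶠ l in 𝓝[≠] (0 : ℂ), P l := by
  have hreal : Tendsto (fun r : ℝ => (r : ℂ)) (𝓝[≠] 0) (𝓝[≠] 0) := by
    refine tendsto_nhdsWithin_iff.2 ⟨?_, ?_⟩
    · exact (Complex.continuous_ofReal.tendsto' 0 0 rfl).mono_left nhdsWithin_le_nhds
    · filter_upwards [self_mem_nhdsWithin] with r hr using Complex.ofReal_ne_zero.2 hr
  exact hreal.frequently (Eventually.of_forall hP).frequently

lemma IsGenerating.map_diag_eq_zero (hS : IsGenerating S) {j : ℕ}
    (p : ContinuousMultilinearMap ℂ (fun _ : Fin j => E) G) (hp : ∀ v ∈ S, p (fun _ => v) = 0)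
    (v : E) : p (fun _ => v) = 0 := by
  obtain ⟨a, ha, b, hb, rfl⟩ := hS v
  have hline : AnalyticOnNhd ℂ (fun l : ℂ => p fun _ => a + l • b) Set.univ := fun l _ =>
    p.analyticAt.comp (AnalyticAt.pi fun _ => by fun_prop)
  refine hline.eqOn_zero_of_preconnected_of_frequently_eq_zero isPreconnected_univ
    (Set.mem_univ 0) (frequently_nhdsNE_zero_of_forall_real fun r => ?_) (Set.mem_univ Complex.I)
  rw [Complex.coe_smul]
  exact hp _ (S.add_mem ha (S.smul_mem r hb))

lemma map_diag_eq_zero_of_isBigO_nhdsWithin {j : ℕ}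
    {p : ContinuousMultilinearMap ℂ (fun _ : Fin j => E) G}
    (h : (fun y => p fun _ => y) =O[𝓝[S] 0] fun y => ‖y‖ ^ (j + 1)) {v : E} (hv : v ∈ S) :
    p (fun _ => v) = 0 := by
  have hval : Tendsto (Subtype.val : S → E) (𝓝 0) (𝓝[S] 0) :=
    tendsto_nhdsWithin_iff.2 ⟨continuous_subtype_val.tendsto' 0 0 rfl,
      Eventually.of_forall fun y => y.2⟩
  exact Asymptotics.IsBigO.continuousMultilinearMap_apply_eq_zero
    (p := (p.restrictScalars ℝ).compContinuousLinearMap fun _ => S.subtypeL)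
    (h.comp_tendsto hval) ⟨v, hv⟩

lemma IsGenerating.coeff_diag_eq_zero (hS : IsGenerating S) {K : E → G}
    {p : FormalMultilinearSeries ℂ E G} (hK : HasFPowerSeriesAt K p 0) {k : ℕ}
    (h : K =O[𝓝[S] 0] fun y => ‖y‖ ^ k) {j : ℕ} (hj : j < k) (v : E) :
    p j (fun _ => v) = 0 := by
  induction j using Nat.strong_induction_on generalizing v with
  | _ j ih =>
  have hpartial : ∀ y, p.partialSum (j + 1) y = p j fun _ => y := fun y => by
    rw [FormalMultilinearSeries.partialSum, Finset.sum_range_succ, Finset.sum_eq_zero, zero_add]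
    exact fun i hi => ih i (Finset.mem_range.1 hi) ((Finset.mem_range.1 hi).trans hj) y
  have hrest := (hK.isBigO_sub_partialSum_pow (j + 1)).mono (nhdsWithin_le_nhds (s := (S : Set E)))
  simp only [hpartial, zero_add] at hrest
  refine hS.map_diag_eq_zero (p j) (fun y hy => map_diag_eq_zero_of_isBigO_nhdsWithin ?_ hy) v
  refine ((h.trans (isBigO_pow_norm_of_le nhdsWithin_le_nhds hj)).sub hrest).congr_left ?_
  exact fun y => sub_sub_cancel _ _

lemma IsGenerating.isBigO_of_nhdsWithin (hS : IsGenerating S) {K : E → G} (hK : AnalyticAt ℂ K 0)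
    {k : ℕ} (h : K =O[𝓝[S] 0] fun y => ‖y‖ ^ k) : K =O[𝓝 0] fun y => ‖y‖ ^ k := by
  obtain ⟨p, hp⟩ := hK
  refine (hp.isBigO_sub_partialSum_pow k).congr_left fun y => ?_
  rw [FormalMultilinearSeries.partialSum, Finset.sum_eq_zero, sub_zero, zero_add]
  exact fun i hi => hS.coeff_diag_eq_zero hp h (Finset.mem_range.1 hi) y

lemma IsGenerating.eventually_eq_zero (hS : IsGenerating S) {K : E → G} {q : E}
    (hK : AnalyticAt ℂ K q) (h : ∀ᶠ v in 𝓝[S] 0, K (q + v) = 0) : ∀ᶠ y in 𝓝 q, K y = 0 := by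
  have hshift : AnalyticAt ℂ (fun v => K (q + v)) 0 :=
    AnalyticAt.fun_comp (g := K) (by simpa using hK) (by fun_prop)
  obtain ⟨p, hp⟩ := hshift
  have hcoeff : ∀ j v, p j (fun _ => v) = 0 := fun j =>
    hS.coeff_diag_eq_zero hp (EventuallyEq.trans_isBigO h (Asymptotics.isBigO_zero _ _))
      j.lt_succ_self
  have hzero : ∀ᶠ v in 𝓝 (0 : E), K (q + v) = 0 := by
    filter_upwards [hp.eventually_hasSum] with v hv
    simp only [zero_add, hcoeff] at hv
    exact hv.unique hasSum_zero
  have hsub : Tendsto (fun y => y - q) (𝓝 q) (𝓝 0) :=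
    (continuous_sub_right q).tendsto' q 0 (sub_self q)
  filter_upwards [hsub.eventually hzero] with y hy
  rwa [add_sub_cancel] at hy

end GeneratingSubspace

section ConjGraph

/-- The maximal totally real subspace `w = z̄` of `ℂⁿ × ℂⁿ`, on which the complexification of a
real-analytic function restricts to the function itself. -/
def conjGraph (n : ℕ) : Submodule ℝ ((Fin n → ℂ) × (Fin n → ℂ)) where
  carrier := {q | q.2 = star q.1}
  add_mem' {p q} hp hq := by simp_all
  zero_mem' := by simp
  smul_mem' r q hq := by simp_all

variable {n : ℕ} {K : (Fin n → ℂ) × (Fin n → ℂ) → ℂ}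

lemma isGenerating_conjGraph (n : ℕ) : IsGenerating (conjGraph n) := by
  rintro ⟨z, w⟩
  refine ⟨((1 / 2 : ℂ) • (z + star w), star ((1 / 2 : ℂ) • (z + star w))), rfl,
    ((-Complex.I / 2) • (z - star w), star ((-Complex.I / 2) • (z - star w))), rfl, ?_⟩
  ext i
  · simp only [Prod.fst_add, Prod.smul_fst, Pi.add_apply, Pi.sub_apply, Pi.smul_apply, smul_eq_mul]
    linear_combination (-1 / 2) * (z i - star w i) * Complex.I_sq
  · simp only [Prod.snd_add, Prod.smul_snd, Pi.add_apply, Pi.sub_apply, Pi.smul_apply,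
      Pi.star_apply, smul_eq_mul, star_mul', star_add, star_sub, star_div₀, star_neg, star_one,
      star_ofNat, RCLike.star_def, Complex.conj_I, Complex.conj_conj]
    linear_combination (1 / 2) * (starRingEnd ℂ (z i) - w i) * Complex.I_sq

lemma eventually_conjGraph_iff {P : (Fin n → ℂ) × (Fin n → ℂ) → Prop} :
    (∀ᶠ q in 𝓝[conjGraph n] 0, P q) ↔ ∀ᶠ z in 𝓝 0, P (z, star z) := by
  have hstar : Tendsto (fun z : Fin n → ℂ => (z, star z)) (𝓝 0) (𝓝[conjGraph n] 0) :=
    tendsto_nhdsWithin_iff.2 ⟨(continuous_id.prodMk continuous_star).tendsto' 0 0 (by simp),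
      Eventually.of_forall fun z => rfl⟩
  refine ⟨hstar.eventually, fun h => ?_⟩
  have hfst : Tendsto Prod.fst (𝓝[(conjGraph n : Set ((Fin n → ℂ) × (Fin n → ℂ)))] 0) (𝓝 0) :=
    (continuous_fst.tendsto' 0 0 Prod.fst_zero).mono_left nhdsWithin_le_nhds
  filter_upwards [hfst.eventually h, self_mem_nhdsWithin] with q hq (hmem : q.2 = star q.1)
  rwa [← hmem] at hq

lemma norm_mk_star (z : Fin n → ℂ) : ‖(z, star z)‖ = ‖z‖ := by
  rw [Prod.norm_mk, norm_star, max_self]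

lemma isBigO_pow_norm_of_conj (hK : AnalyticAt ℂ K 0) {k : ℕ}
    (h : (fun z : Fin n → ℂ => K (z, star z)) =O[𝓝 0] fun z => ‖z‖ ^ k) :
    K =O[𝓝 0] fun q => ‖q‖ ^ k := by
  refine (isGenerating_conjGraph n).isBigO_of_nhdsWithin hK ?_
  obtain ⟨C, hC⟩ := h.bound
  refine Asymptotics.IsBigO.of_bound C (eventually_conjGraph_iff.2 ?_)
  simpa only [norm_mk_star] using hC

lemma eventually_eq_zero_of_conj {q : Fin n → ℂ} (hK : AnalyticAt ℂ K (q, star q))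
    (h : ∀ᶠ z in 𝓝 q, K (z, star z) = 0) : ∀ᶠ y in 𝓝 (q, star q), K y = 0 := by
  refine (isGenerating_conjGraph n).eventually_eq_zero hK (eventually_conjGraph_iff.2 ?_)
  have hshift : Tendsto (fun z => q + z) (𝓝 0) (𝓝 q) :=
    (continuous_const_add q).tendsto' 0 q (add_zero q)
  filter_upwards [hshift.eventually h] with z hz
  rwa [star_add] at hz

end ConjGraph

section CauchyDivision

lemma differentiableOn_circleIntegral_param {E : Type*} [NormedAddCommGroup E] [NormedSpace ℂ E]
    [CompleteSpace E] {f : ℂ × ℂ → E} {V : Set ℂ} (hV : IsOpen V) {c : ℂ} {R : ℝ}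
    (hf : AnalyticOnNhd ℂ f (V ×ˢ Metric.sphere c |R|)) :
    DifferentiableOn ℂ (fun l => ∮ t in C(c, R), f (l, t)) V := by
  intro l₀ hl₀
  obtain ⟨ε, hε, hεV⟩ := Metric.nhds_basis_closedBall.mem_iff.1 (hV.mem_nhds hl₀)
  have hmem : ∀ l ∈ V, ∀ θ, (l, circleMap c R θ) ∈ V ×ˢ Metric.sphere c |R| := fun l hl θ =>
    ⟨hl, circleMap_mem_sphere' c R θ⟩
  have hderiv : Continuous (deriv (circleMap c R)) := by
    simpa only [funext (deriv_circleMap c R)] using by fun_prop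
  have hcont : ∀ l ∈ V, Continuous fun θ => deriv (circleMap c R) θ • f (l, circleMap c R θ) :=
    fun l hl => hderiv.smul <| hf.continuousOn.comp_continuous (by fun_prop) (hmem l hl)
  have hpartial : ContinuousOn (fun x => fderiv ℂ f x (1, 0)) (V ×ˢ Metric.sphere c |R|) :=
    fun x hx => ((hf x hx).fderiv.continuousAt.clm_apply continuousAt_const).continuousWithinAt
  obtain ⟨C, hC⟩ := ((isCompact_closedBall l₀ ε).prod
    (isCompact_sphere c |R|)).exists_bound_of_continuousOn
      (hpartial.mono (Set.prod_mono hεV subset_rfl))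
  have key := intervalIntegral.hasDerivAt_integral_of_dominated_loc_of_deriv_le
    (μ := MeasureTheory.volume) (a := 0) (b := 2 * Real.pi)
    (F := fun l θ => deriv (circleMap c R) θ • f (l, circleMap c R θ))
    (F' := fun l θ => deriv (circleMap c R) θ • fderiv ℂ f (l, circleMap c R θ) (1, 0))
    (bound := fun _ => |R| * C) (Metric.closedBall_mem_nhds l₀ hε)
    (by filter_upwards [hV.mem_nhds hl₀] with l hl using (hcont l hl).aestronglyMeasurable)
    ((hcont l₀ hl₀).intervalIntegrable _ _)
    (hderiv.smul (hpartial.comp_continuous (by fun_prop) (hmem l₀ hl₀))).aestronglyMeasurable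
    (Eventually.of_forall fun θ _ l hl => ?_) intervalIntegrable_const
    (Eventually.of_forall fun θ _ l hl => ?_)
  · exact key.2.differentiableAt.differentiableWithinAt
  · rw [norm_smul, deriv_circleMap, norm_mul, norm_circleMap_zero, Complex.norm_I, mul_one]
    exact mul_le_mul_of_nonneg_left (hC _ ⟨hl, circleMap_mem_sphere' c R θ⟩) (abs_nonneg R)
  · have hf' := (hf _ (hmem l (hεV hl) θ)).differentiableAt.hasFDerivAt
    exact (hf'.comp_hasDerivAt l ((hasDerivAt_id l).prodMk (hasDerivAt_const l _))).const_smul _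

lemma analyticAt_dslope_self {f : ℂ → ℂ} {a : ℂ} (hf : AnalyticAt ℂ f a) :
    AnalyticAt ℂ (dslope f a) a :=
  let ⟨_, hp⟩ := hf
  hp.has_fpower_series_dslope_fslope.analyticAt

lemma exists_differentiableOn_quotient {D g : ℂ → ℂ} {s : Set ℂ} (hD : AnalyticOnNhd ℂ D s)
    (hg : AnalyticOnNhd ℂ g s) (hzero : ∀ t ∈ s, g t = 0 → D t = 0 ∧ deriv g t ≠ 0) :
    ∃ q : ℂ → ℂ, DifferentiableOn ℂ q s ∧ ∀ t ∈ s, D t = g t * q t := by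
  classical
  set q : ℂ → ℂ := fun t => if g t = 0 then deriv D t / deriv g t else D t / g t with hq
  refine ⟨q, fun a ha => DifferentiableAt.differentiableWithinAt ?_, fun t ht => ?_⟩
  swap
  · by_cases hgt : g t = 0
    · rw [hgt, zero_mul, (hzero t ht hgt).1]
    · simp only [hq, if_neg hgt, mul_div_cancel₀ _ hgt]
  by_cases hga : g a = 0
  · obtain ⟨hDa, hga'⟩ := hzero a ha hga
    have hslopeD := analyticAt_dslope_self (hD a ha)
    have hslopeg := analyticAt_dslope_self (hg a ha)
    have hslope_ne : dslope g a a ≠ 0 := by rwa [dslope_same]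
    refine (hslopeD.differentiableAt.div hslopeg.differentiableAt
      hslope_ne).congr_of_eventuallyEq ?_
    filter_upwards [hslopeg.continuousAt.eventually_ne hslope_ne] with t ht
    rcases eq_or_ne t a with rfl | hta
    · simp only [hq, if_pos hga, Pi.div_apply, dslope_same]
    · have hta' : t - a ≠ 0 := sub_ne_zero.2 hta
      have hDt : D t = (t - a) * dslope D a t := by
        rw [← smul_eq_mul, sub_smul_dslope, hDa, sub_zero]
      have hgt : g t = (t - a) * dslope g a t := by
        rw [← smul_eq_mul, sub_smul_dslope, hga, sub_zero]
      have hgt_ne : g t ≠ 0 := hgt ▸ mul_ne_zero hta' ht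
      simp only [hq, if_neg hgt_ne, Pi.div_apply]
      rw [hDt, hgt, mul_div_mul_left _ _ hta']
  · refine ((hD a ha).differentiableAt.div (hg a ha).differentiableAt hga).congr_of_eventuallyEq ?_
    filter_upwards [(hg a ha).continuousAt.eventually_ne hga] with t ht
    simp only [hq, if_neg ht, Pi.div_apply]

lemma two_pi_I_mul_eq_mul_circleIntegral_div {D g : ℂ → ℂ} {c : ℂ} {R : ℝ}
    (hD : AnalyticOnNhd ℂ D (Metric.closedBall c R))
    (hg : AnalyticOnNhd ℂ g (Metric.closedBall c R))
    (hzero : ∀ t ∈ Metric.closedBall c R, g t = 0 → D t = 0 ∧ deriv g t ≠ 0)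
    (hsphere : ∀ t ∈ Metric.sphere c R, g t ≠ 0) {t : ℂ} (ht : t ∈ Metric.ball c R) :
    (2 * Real.pi * Complex.I : ℂ) * D t = g t * ∮ τ in C(c, R), (τ - t)⁻¹ • (D τ / g τ) := by
  obtain ⟨q, hq, hDq⟩ := exists_differentiableOn_quotient hD hg hzero
  have hint : (∮ τ in C(c, R), (τ - t)⁻¹ • (D τ / g τ)) = ∮ τ in C(c, R), (τ - t)⁻¹ • q τ := by
    refine circleIntegral.integral_congr (Metric.pos_of_mem_ball ht).le fun τ hτ => ?_
    simp only [hDq τ (Metric.sphere_subset_closedBall hτ), mul_div_cancel_left₀ _ (hsphere τ hτ)]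
  rw [hint, hq.circleIntegral_sub_inv_smul ht, hDq t (Metric.ball_subset_closedBall ht),
    smul_eq_mul, mul_left_comm]

/-- The Cauchy integral of `D / G` over the circle is defined for every parameter, and it continues
analytically the relation `2πi D = G ∮ …` valid near `l₀`. -/
lemma eq_zero_of_eventually_eq_zero_of_param {V : Set ℂ} (hV : IsOpen V)
    (hVc : IsPreconnected V) {G D : ℂ × ℂ → ℂ} {c : ℂ} {R : ℝ}
    (hG : AnalyticOnNhd ℂ G (V ×ˢ Metric.closedBall c R))
    (hD : AnalyticOnNhd ℂ D (V ×ˢ Metric.closedBall c R))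
    (hsphere : ∀ l ∈ V, ∀ t ∈ Metric.sphere c R, G (l, t) ≠ 0) {l₀ : ℂ} (hl₀ : l₀ ∈ V)
    (hnear : ∀ᶠ l in 𝓝 l₀, ∀ t ∈ Metric.closedBall c R, G (l, t) = 0 →
      D (l, t) = 0 ∧ deriv (fun t => G (l, t)) t ≠ 0)
    {l : ℂ} (hl : l ∈ V) {t : ℂ} (ht : t ∈ Metric.ball c R) (h0 : G (l, t) = 0) :
    D (l, t) = 0 := by
  have htc := Metric.ball_subset_closedBall ht
  have hslice : ∀ {f : ℂ × ℂ → ℂ}, AnalyticOnNhd ℂ f (V ×ˢ Metric.closedBall c R) →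
      DifferentiableOn ℂ (fun l => f (l, t)) V := fun hf l hl =>
    ((hf (l, t) ⟨hl, htc⟩).comp (f := fun l => (l, t))
      (by fun_prop)).differentiableAt.differentiableWithinAt
  have hfiber : ∀ {f : ℂ × ℂ → ℂ}, AnalyticOnNhd ℂ f (V ×ˢ Metric.closedBall c R) →
      ∀ l ∈ V, AnalyticOnNhd ℂ (fun τ => f (l, τ)) (Metric.closedBall c R) := fun hf l hl τ hτ =>
    (hf (l, τ) ⟨hl, hτ⟩).comp (f := fun τ => (l, τ)) (by fun_prop)
  have hint : DifferentiableOn ℂ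
      (fun l => ∮ τ in C(c, R), (τ - t)⁻¹ • (D (l, τ) / G (l, τ))) V := by
    refine differentiableOn_circleIntegral_param
      (f := fun q => (q.2 - t)⁻¹ • (D q / G q)) hV fun q hq => ?_
    rw [abs_of_pos (Metric.pos_of_mem_ball ht)] at hq
    have hq' := And.intro hq.1 (Metric.sphere_subset_closedBall hq.2)
    refine AnalyticAt.fun_smul ((analyticAt_snd.fun_sub analyticAt_const).fun_inv ?_)
      ((hD q hq').fun_div (hG q hq') (hsphere _ hq.1 _ hq.2))
    exact sub_ne_zero.2 (Metric.sphere_disjoint_ball.ne_of_mem hq.2 ht)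
  have hdiff : AnalyticOnNhd ℂ (fun l => (2 * Real.pi * Complex.I : ℂ) * D (l, t) -
      G (l, t) * ∮ τ in C(c, R), (τ - t)⁻¹ • (D (l, τ) / G (l, τ))) V :=
    (((hslice hD).const_mul _).sub ((hslice hG).mul hint)).analyticOnNhd hV
  have hvanish := hdiff.eqOn_zero_of_preconnected_of_eventuallyEq_zero hVc hl₀ (by
    filter_upwards [hnear, hV.mem_nhds hl₀] with l hlzero hl
    exact sub_eq_zero.2 (two_pi_I_mul_eq_mul_circleIntegral_div (hfiber hD l hl) (hfiber hG l hl)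
      hlzero (hsphere l hl) ht)) hl
  simpa [h0, Real.pi_ne_zero] using hvanish

lemma eq_zero_of_eventually_eq_zero_of_convex {E : Type*} [NormedAddCommGroup E]
    [NormedSpace ℂ E] {Ω : Set E} (hΩ : IsOpen Ω) (hΩc : Convex ℝ Ω) {G D : E × ℂ → ℂ} {c : ℂ}
    {R : ℝ} (hG : AnalyticOnNhd ℂ G (Ω ×ˢ Metric.closedBall c R))
    (hD : AnalyticOnNhd ℂ D (Ω ×ˢ Metric.closedBall c R))
    (hsphere : ∀ y ∈ Ω, ∀ t ∈ Metric.sphere c R, G (y, t) ≠ 0) {y₀ : E} (hy₀ : y₀ ∈ Ω)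
    (hnear : ∀ᶠ y in 𝓝 y₀, ∀ t ∈ Metric.closedBall c R, G (y, t) = 0 →
      D (y, t) = 0 ∧ deriv (fun t => G (y, t)) t ≠ 0)
    {y : E} (hy : y ∈ Ω) {t : ℂ} (ht : t ∈ Metric.ball c R) (h0 : G (y, t) = 0) :
    D (y, t) = 0 := by
  set line : ℂ → E := fun l => y₀ + l • (y - y₀) with hline
  have hline0 : line 0 = y₀ := by simp [hline]
  have hline1 : line 1 = y := by simp [hline]
  have hcont : Continuous line := by fun_prop
  have hconvex : Convex ℝ (line ⁻¹' Ω) :=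
    (hΩc.translate_preimage_right y₀).is_linear_preimage
      (f := fun l : ℂ => l • (y - y₀)) ⟨fun a b => add_smul a b _, fun r a => smul_assoc r a _⟩
  have hrestrict : ∀ {f : E × ℂ → ℂ}, AnalyticOnNhd ℂ f (Ω ×ˢ Metric.closedBall c R) →
      AnalyticOnNhd ℂ (fun q : ℂ × ℂ => f (line q.1, q.2))
        ((line ⁻¹' Ω) ×ˢ Metric.closedBall c R) := fun hf q hq =>
    (hf (line q.1, q.2) hq).comp (f := fun q : ℂ × ℂ => (line q.1, q.2))
      ((analyticAt_const.fun_add (analyticAt_fst.fun_smul analyticAt_const)).prod analyticAt_snd)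
  have hzero := eq_zero_of_eventually_eq_zero_of_param (hΩ.preimage hcont)
    hconvex.isPreconnected (hrestrict hG) (hrestrict hD) (fun l hl => hsphere _ hl)
    (l₀ := 0) (by rwa [Set.mem_preimage, hline0])
    ((hcont.tendsto' 0 y₀ hline0).eventually hnear) (l := 1)
    (by rwa [Set.mem_preimage, hline1]) ht
  simp only [hline1] at hzero
  exact hzero h0

end CauchyDivision

section OneVariable

open scoped NNReal

variable {𝕜 : Type*} [RCLike 𝕜] {f : 𝕜 → 𝕜} {s : Set 𝕜} {a : 𝕜} {C : ℝ≥0}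

lemma approximatesLinearOn_of_norm_deriv_sub_le (hs : Convex ℝ s) {f' : 𝕜 → 𝕜}
    (hf : ∀ t ∈ s, HasDerivAt f (f' t) t) (hC : ∀ t ∈ s, ‖f' t - a‖ ≤ C) :
    ApproximatesLinearOn f (ContinuousLinearMap.toSpanSingleton 𝕜 a) s C := fun t ht τ hτ =>
  hs.norm_image_sub_le_of_norm_hasFDerivWithin_le'
    (fun l hl => (hf l hl).hasFDerivAt.hasFDerivWithinAt) (fun l hl => by
      simpa only [← ContinuousLinearMap.toSpanSingletonLIE_apply, ← map_sub,
        LinearIsometryEquiv.norm_map] using hC l hl) hτ ht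

lemma injOn_of_approximatesLinearOn_toSpanSingleton
    (hf : ApproximatesLinearOn f (ContinuousLinearMap.toSpanSingleton 𝕜 a) s C)
    (hC : C < ‖a‖) : Set.InjOn f s := fun t ht τ hτ heq => by
  have hle := hf t ht τ hτ
  rw [heq, sub_self, zero_sub, norm_neg, ContinuousLinearMap.toSpanSingleton_apply, norm_smul,
    mul_comm] at hle
  by_contra hne
  exact (le_of_mul_le_mul_right hle (norm_sub_pos_iff.2 hne)).not_gt hC

lemma exists_zero_of_approximatesLinearOn_toSpanSingleton {c : 𝕜} {r : ℝ} (hr : 0 ≤ r)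
    (hf : ApproximatesLinearOn f (ContinuousLinearMap.toSpanSingleton 𝕜 a)
      (Metric.closedBall c r) C) (ha : a ≠ 0) (hc : ‖f c‖ ≤ (‖a‖ - C) * r) :
    ∃ t ∈ Metric.closedBall c r, f t = 0 := by
  let inverse : (ContinuousLinearMap.toSpanSingleton 𝕜 a).NonlinearRightInverse :=
    { toFun := fun t => t / a
      nnnorm := ‖a‖₊⁻¹
      bound' := fun t => by simp [div_eq_inv_mul]
      right_inv' := fun t => by simp [ha] }
  refine hf.surjOn_closedBall_of_nonlinearRightInverse inverse hr subset_rfl ?_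
  simpa [inverse, dist_eq_norm] using hc

end OneVariable

section Calculus

variable {E : Type*} [NormedAddCommGroup E] [NormedSpace ℂ E]

lemma norm_fderiv_apply_le_of_unit_disc {F : Type*} [NormedAddCommGroup F] [NormedSpace ℂ F]
    {f : E → F} {p v : E} {C : ℝ} (hf : ∀ l : ℂ, ‖l‖ ≤ 1 → DifferentiableAt ℂ f (p + l • v))
    (hC : ∀ l : ℂ, ‖l‖ ≤ 1 → ‖f (p + l • v)‖ ≤ C) : ‖fderiv ℂ f p v‖ ≤ C := by
  have hp : DifferentiableAt ℂ f p := by simpa using hf 0 (by simp)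
  rw [← hp.lineDeriv_eq_fderiv, lineDeriv]
  have hdiff : DiffContOnCl ℂ (fun l : ℂ => f (p + l • v)) (Metric.ball 0 1) := by
    refine DifferentiableOn.diffContOnCl fun l hl => ?_
    rw [closure_ball _ one_ne_zero, mem_closedBall_zero_iff] at hl
    exact ((hf l hl).comp l (by fun_prop)).differentiableWithinAt
  simpa using Complex.norm_deriv_le_of_forall_mem_sphere_norm_le one_pos hdiff
    fun l hl => hC l (mem_sphere_zero_iff_norm.1 hl).le

lemma analyticAt_of_eventually_unique_zero [CompleteSpace E] {f : E × ℂ → ℂ} {κ : E → ℂ} {y₀ : E}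
    (hf : AnalyticAt ℂ f (y₀, κ y₀)) (hzero : f (y₀, κ y₀) = 0)
    (hne : fderiv ℂ f (y₀, κ y₀) (0, 1) ≠ 0) {U : Set ℂ} (hU : U ∈ 𝓝 (κ y₀))
    (hunique : ∀ᶠ y in 𝓝 y₀, ∀ u ∈ U, f (y, u) = 0 → u = κ y) : AnalyticAt ℂ κ y₀ := by
  have hcd : ContDiffAt ℂ ⊤ f (y₀, κ y₀) := hf.contDiffAt
  have hinv : (fderiv ℂ f (y₀, κ y₀) ∘L .inr ℂ E ℂ).IsInvertible := by
    refine ⟨ContinuousLinearEquiv.unitsEquivAut ℂ (Units.mk0 _ hne), ?_⟩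
    ext
    simp
  have hψ := hcd.contDiffAt_implicitFunction (by simp) hinv
  have hψzero := hcd.eventually_apply_implicitFunction (by simp) hinv
  have hψself := hcd.implicitFunction_apply_self (by simp) hinv
  refine hψ.analyticAt.congr ?_
  filter_upwards [hunique, hψzero, hψ.continuousAt.eventually_mem (by rwa [hψself])]
    with y hy hyzero hyU
  exact hy _ hyU (hyzero.trans hzero)

lemma analyticAt_clm_apply {F G : Type*} [NormedAddCommGroup F] [NormedSpace ℂ F]
    [NormedAddCommGroup G] [NormedSpace ℂ G] {L : E → F →L[ℂ] G} {v : E → F} {x : E}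
    (hL : AnalyticAt ℂ L x) (hv : AnalyticAt ℂ v x) : AnalyticAt ℂ (fun x => L x (v x)) x :=
  AnalyticAt.comp (f := fun x => (L x, v x))
    ((ContinuousLinearMap.id ℂ (F →L[ℂ] G)).analyticAt_bilinear (L x, v x)) (hL.prod hv)

lemma analyticAt_fderiv_apply {X F : Type*} [NormedAddCommGroup X] [NormedSpace ℂ X]
    [NormedAddCommGroup F] [NormedSpace ℂ F] [CompleteSpace F] {f : E → F} {q : X → E} {x : X}
    (hf : AnalyticAt ℂ f (q x)) (hq : AnalyticAt ℂ q x) (v : E) :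
    AnalyticAt ℂ (fun x => fderiv ℂ f (q x) v) x :=
  analyticAt_clm_apply (hf.fderiv.fun_comp hq) analyticAt_const

end Calculus

section KernelProjection

variable {E X : Type*} [NormedAddCommGroup E] [NormedSpace ℂ E] [NormedAddCommGroup X]
  [NormedSpace ℂ X]

/-- The projection of `a` to the kernel of `L` in the direction `e`, multiplied by `L e`. Not
dividing by `L e` keeps it holomorphic in `L`. -/
noncomputable def kerProj (L : E →L[ℂ] ℂ) (e a : E) : E := L e • a - L a • e

lemma map_kerProj (L : E →L[ℂ] ℂ) (e a : E) : L (kerProj L e a) = 0 := by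
  simp [kerProj, mul_comm]

lemma hasFDerivAt_div_apply_zero {Φ : X → E →L[ℂ] ℂ} {Φ' : X →L[ℂ] E →L[ℂ] ℂ} {x : X} {e a : E}
    (hΦ : HasFDerivAt Φ Φ' x) (he : Φ x e ≠ 0) (hker : ∀ ξ, Φ' ξ (kerProj (Φ x) e a) = 0) :
    HasFDerivAt (fun x => Φ x a / Φ x e) (0 : X →L[ℂ] ℂ) x := by
  have happly : ∀ v, HasFDerivAt (fun x => Φ x v) (Φ'.flip v) x := fun v => by
    simpa using hΦ.clm_apply (hasFDerivAt_const v x)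
  have hinv := (hasDerivAt_inv he).comp_hasFDerivAt x (happly e)
  refine ((happly a).mul hinv).congr_fderiv (ContinuousLinearMap.ext fun ξ => ?_)
  have hξ := hker ξ
  simp only [kerProj, map_sub, map_smul, smul_eq_mul] at hξ
  simp only [Function.comp_apply, add_apply, smul_apply,
    ContinuousLinearMap.flip_apply, smul_eq_mul, zero_apply]
  field_simp
  linear_combination hξ

end KernelProjection

section ZerosNearImaginaryAxis

open Complex

lemma exists_zero_of_near_re {ρ : ℂ → ℝ} (hρ : ContinuousOn ρ (Metric.ball I (1 / 2)))
    (hnear : ∀ c ∈ Metric.ball I (1 / 2), |ρ c - 2 * c.re| < 1 / 2) {y : ℝ}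
    (hy : y ∈ Set.Icc (3 / 4) (5 / 4)) :
    ∃ c ∈ Metric.closedBall I (3 / 8), c.im = y ∧ ρ c = 0 := by
  set segment : ℝ → ℂ := fun x => x + y * I with hsegment
  have hmem : ∀ x ∈ Set.Icc (-(1 / 4) : ℝ) (1 / 4), segment x ∈ Metric.closedBall I (3 / 8) := by
    intro x hx
    rw [mem_closedBall_iff_norm, Complex.norm_def, Real.sqrt_le_left (by norm_num),
      Complex.normSq_apply]
    simp only [hsegment, sub_re, add_re, ofReal_re, re_ofReal_mul, I_re, mul_zero, sub_im, add_im,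
      ofReal_im, im_ofReal_mul, I_im, mul_one]
    nlinarith [hx.1, hx.2, hy.1, hy.2]
  have hsub : Metric.closedBall I (3 / 8) ⊆ Metric.ball I (1 / 2) :=
    Metric.closedBall_subset_ball (by norm_num)
  have hcont : ContinuousOn (fun x => ρ (segment x)) (Set.Icc (-(1 / 4)) (1 / 4)) :=
    hρ.comp (by fun_prop) fun x hx => hsub (hmem x hx)
  have hleft := abs_lt.1 (hnear _ (hsub (hmem (-(1 / 4)) (by norm_num))))
  have hright := abs_lt.1 (hnear _ (hsub (hmem (1 / 4) (by norm_num))))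
  have hre : ∀ x, (segment x).re = x := fun x => by simp [hsegment]
  rw [hre] at hleft hright
  obtain ⟨x, hx, hzero⟩ := intermediate_value_Icc (by norm_num) hcont
    (show (0 : ℝ) ∈ _ from ⟨by linarith [hleft.2], by linarith [hright.1]⟩)
  exact ⟨segment x, hmem x hx, by simp [hsegment], hzero⟩

lemma eqOn_zero_of_zeros_of_near_re {ρ : ℂ → ℝ} {f : ℂ → ℂ}
    (hρ : ContinuousOn ρ (Metric.ball I (1 / 2)))
    (hnear : ∀ c ∈ Metric.ball I (1 / 2), |ρ c - 2 * c.re| < 1 / 2)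
    (hf : AnalyticOnNhd ℂ f (Metric.ball I (1 / 2)))
    (hzero : ∀ c ∈ Metric.ball I (1 / 2), ρ c = 0 → f c = 0) :
    Set.EqOn f 0 (Metric.ball I (1 / 2)) := by
  have hsub : Metric.closedBall I (3 / 8) ⊆ Metric.ball I (1 / 2) :=
    Metric.closedBall_subset_ball (by norm_num)
  have hinf : {c ∈ Metric.closedBall I (3 / 8) | f c = 0}.Infinite := by
    refine Set.Infinite.of_image im <| (Set.Icc_infinite (by norm_num : (3 / 4 : ℝ) < 5 / 4)).mono
      fun y hy => ?_
    obtain ⟨c, hc, hcy, hρc⟩ := exists_zero_of_near_re hρ hnear hy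
    exact ⟨c, ⟨hc, hzero c (hsub hc) hρc⟩, hcy⟩
  obtain ⟨c, hc, hacc⟩ := hinf.exists_accPt_of_subset_isCompact
    (isCompact_closedBall I (3 / 8)) fun c hc => hc.1
  exact hf.eqOn_zero_of_preconnected_of_frequently_eq_zero
    (convex_ball I (1 / 2)).isPreconnected (hsub hc)
    ((accPt_iff_frequently_nhdsNE.1 hacc).mono fun c hc => hc.2)

end ZerosNearImaginaryAxis

section ConsCoordinates

variable {m : ℕ}

/-- The vector `(u, x₁, …, xₘ)` as a continuous linear function of `(u, x)`; it singles out the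
coordinate with index `0`. -/
noncomputable def consL (m : ℕ) : ℂ × (Fin m → ℂ) →L[ℂ] (Fin (m + 1) → ℂ) :=
  (Fin.consEquivL ℂ (fun _ : Fin (m + 1) => ℂ) : ℂ × (Fin m → ℂ) →L[ℂ] (Fin (m + 1) → ℂ))

@[simp]
lemma consL_zero (u : ℂ) (x : Fin m → ℂ) : consL m (u, x) 0 = u := by
  simp [consL]

@[simp]
lemma consL_succ (u : ℂ) (x : Fin m → ℂ) (i : Fin m) : consL m (u, x) i.succ = x i := by
  simp [consL]

@[simp]
lemma tail_consL (u : ℂ) (x : Fin m → ℂ) : Fin.tail (consL m (u, x)) = x :=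
  funext fun i => consL_succ u x i

lemma consL_tail (c : Fin (m + 1) → ℂ) : consL m (c 0, Fin.tail c) = c := by
  ext i
  cases i using Fin.cases <;> simp [Fin.tail]

lemma prod_consL (u : ℂ) (x : Fin m → ℂ) : ∏ i, consL m (u, x) i = u * ∏ i, x i := by
  simp [Fin.prod_univ_succ]

lemma star_consL (u : ℂ) (x : Fin m → ℂ) : star (consL m (u, x)) = consL m (star u, star x) := by
  ext i
  cases i using Fin.cases <;> simp

lemma consL_add_smul_single (u l : ℂ) (x : Fin m → ℂ) :
    consL m (u, x) + l • Pi.single 0 1 = consL m (u + l, x) := by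
  ext i
  cases i using Fin.cases <;> simp

lemma norm_lt_of_tail {b : Fin (m + 1) → ℂ} {r : ℝ} (hr : 0 < r) (hzero : ‖b 0‖ < r)
    (htail : ∀ i, ‖Fin.tail b i‖ < r) : ‖b‖ < r := by
  rw [pi_norm_lt_iff hr]
  exact Fin.cases hzero htail

end ConsCoordinates

section Polyannulus

variable {m : ℕ} {x : Fin m → ℂ}

/-- The polyannulus `1/2 < |xᵢ| < 2`. -/
def polyAnn (m : ℕ) : Set (Fin m → ℂ) := Set.pi Set.univ fun _ => {t : ℂ | 1 / 2 < ‖t‖ ∧ ‖t‖ < 2}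

lemma mem_polyAnn : x ∈ polyAnn m ↔ ∀ i, 1 / 2 < ‖x i‖ ∧ ‖x i‖ < 2 := by
  simp [polyAnn]

lemma isOpen_polyAnn (m : ℕ) : IsOpen (polyAnn m) :=
  isOpen_set_pi Set.finite_univ fun _ _ =>
    (isOpen_lt continuous_const continuous_norm).inter (isOpen_lt continuous_norm continuous_const)

lemma isPreconnected_polyAnn (m : ℕ) : IsPreconnected (polyAnn m) := by
  refine isPreconnected_univ_pi fun _ => ?_
  have hpolar : {t : ℂ | 1 / 2 < ‖t‖ ∧ ‖t‖ < 2} =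
      (fun y : ℝ × ℝ => (y.1 : ℂ) * Complex.exp (y.2 * Complex.I)) ''
        (Set.Ioo (1 / 2) 2 ×ˢ Set.univ) := by
    ext t
    constructor
    · exact fun ht => ⟨(‖t‖, Complex.arg t), ⟨ht, trivial⟩, Complex.norm_mul_exp_arg_mul_I t⟩
    · rintro ⟨y, ⟨hy, -⟩, rfl⟩
      have hpos : 0 < y.1 := lt_trans (by norm_num) hy.1
      simpa [Complex.norm_exp_ofReal_mul_I, abs_of_pos hpos] using hy
  rw [hpolar]
  exact (isPreconnected_Ioo.prod isPreconnected_univ).image _ (by fun_prop)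

lemma one_mem_polyAnn (m : ℕ) : (1 : Fin m → ℂ) ∈ polyAnn m := by
  norm_num [mem_polyAnn]

lemma star_mem_polyAnn (hx : x ∈ polyAnn m) : star x ∈ polyAnn m := by
  simpa [mem_polyAnn] using hx

lemma pow_le_norm_prod {r : ℝ} (hr : 0 ≤ r) (hx : ∀ i, r ≤ ‖x i‖) : r ^ m ≤ ‖∏ i, x i‖ := by
  rw [norm_prod, ← Fin.prod_const]
  exact Finset.prod_le_prod (fun _ _ => hr) fun i _ => hx i

lemma norm_prod_le_pow {r : ℝ} (hx : ‖x‖ ≤ r) : ‖∏ i, x i‖ ≤ r ^ m := by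
  rw [norm_prod, ← Fin.prod_const]
  exact Finset.prod_le_prod (fun _ _ => norm_nonneg _) fun i _ => (norm_le_pi_norm x i).trans hx

lemma four_le_four_pow (m : ℕ) : (4 : ℝ) ≤ 4 ^ (m + 1) :=
  le_self_pow₀ (by norm_num) m.succ_ne_zero

lemma quarter_pow_le (m : ℕ) : (1 / 4 : ℝ) ^ (m + 1) ≤ 1 / 4 :=
  pow_le_of_le_one (by norm_num) (by norm_num) m.succ_ne_zero

lemma le_norm_prod_sub_quarter_pow (hx : x ∈ polyAnn m) :
    (1 / 2) ^ m * (3 / 4) ≤ ‖∏ i, x i‖ - (1 / 4) ^ (m + 1) := by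
  have hprod := pow_le_norm_prod (by norm_num) fun i => (mem_polyAnn.1 hx i).1.le
  have hpow : (1 / 4 : ℝ) ^ m ≤ (1 / 2) ^ m := pow_le_pow_left₀ (by norm_num) (by norm_num) m
  rw [pow_succ]
  linarith

lemma quarter_pow_lt_norm_prod (hx : x ∈ polyAnn m) : (1 / 4) ^ (m + 1) < ‖∏ i, x i‖ := by
  have hpos : (0 : ℝ) < (1 / 2) ^ m * (3 / 4) := by positivity
  linarith [le_norm_prod_sub_quarter_pow hx]

end Polyannulus

section NearProdSum

variable {m : ℕ} {p : (Fin (m + 1) → ℂ) × (Fin (m + 1) → ℂ)}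

/-- The polynomial `∏ zᵢ + ∏ wᵢ`, which is twice the complexification of `Re (∏ zᵢ)`. -/
def prodSum {n : ℕ} (p : (Fin n → ℂ) × (Fin n → ℂ)) : ℂ := ∏ i, p.1 i + ∏ i, p.2 i

lemma hasLineDerivAt_prodSum_single_fst (p : (Fin (m + 1) → ℂ) × (Fin (m + 1) → ℂ)) :
    HasLineDerivAt ℂ prodSum (∏ i, Fin.tail p.1 i) p (Pi.single 0 1, 0) := by
  have hderiv := (((hasDerivAt_id (0 : ℂ)).const_add (p.1 0)).mul_const
    (∏ i, Fin.tail p.1 i)).add_const (∏ i, p.2 i)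
  rw [one_mul] at hderiv
  refine hderiv.congr_of_eventuallyEq (Eventually.of_forall fun l => ?_)
  simp [prodSum, Fin.prod_univ_succ, Fin.tail]

lemma hasLineDerivAt_prodSum_single_snd (p : (Fin (m + 1) → ℂ) × (Fin (m + 1) → ℂ)) :
    HasLineDerivAt ℂ prodSum (∏ i, Fin.tail p.2 i) p (0, Pi.single 0 1) := by
  have hderiv := (((hasDerivAt_id (0 : ℂ)).const_add (p.2 0)).mul_const
    (∏ i, Fin.tail p.2 i)).const_add (∏ i, p.1 i)
  rw [one_mul] at hderiv
  refine hderiv.congr_of_eventuallyEq (Eventually.of_forall fun l => ?_)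
  simp [prodSum, Fin.prod_univ_succ, Fin.tail]

/-- `g` is a small holomorphic perturbation of `prodSum`. The radius exceeds `4 ^ (m + 1)`, so that
over the polyannulus the zeros of `prodSum` in one variable `w₀` stay well inside the domain, and
the error is small compared with the products of `m` coordinates of modulus at least `1 / 2`. -/
structure NearProdSum (m : ℕ) (g : (Fin (m + 1) → ℂ) × (Fin (m + 1) → ℂ) → ℂ) : Prop where
  analytic : AnalyticOnNhd ℂ g (Metric.ball 0 (4 ^ (m + 1) + 2))
  norm_sub_le : ∀ p ∈ Metric.ball 0 (4 ^ (m + 1) + 2), ‖g p - prodSum p‖ ≤ (1 / 4) ^ (m + 1)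

namespace NearProdSum

variable {g : (Fin (m + 1) → ℂ) × (Fin (m + 1) → ℂ) → ℂ}

lemma analyticAt (hg : NearProdSum m g) (hp : ‖p‖ < 4 ^ (m + 1) + 1) : AnalyticAt ℂ g p :=
  hg.analytic p (mem_ball_zero_iff.2 (by linarith))

lemma norm_prodSum_le_of_zero (hg : NearProdSum m g) (hp : ‖p‖ < 4 ^ (m + 1) + 1)
    (hzero : g p = 0) : ‖prodSum p‖ ≤ (1 / 4) ^ (m + 1) := by
  simpa [hzero] using hg.norm_sub_le p (mem_ball_zero_iff.2 (by linarith))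

lemma norm_fderiv_sub_le (hg : NearProdSum m g) {v : (Fin (m + 1) → ℂ) × (Fin (m + 1) → ℂ)}
    {β : ℂ} (hp : ‖p‖ < 4 ^ (m + 1) + 1) (hv : ‖v‖ ≤ 1) (hβ : HasLineDerivAt ℂ prodSum β p v) :
    ‖fderiv ℂ g p v - β‖ ≤ (1 / 4) ^ (m + 1) := by
  have hprod : Differentiable ℂ (prodSum : (Fin (m + 1) → ℂ) × (Fin (m + 1) → ℂ) → ℂ) := by
    unfold prodSum
    fun_prop
  have hmem : ∀ l : ℂ, ‖l‖ ≤ 1 → p + l • v ∈ Metric.ball 0 (4 ^ (m + 1) + 2) := fun l hl => by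
    rw [mem_ball_zero_iff]
    calc ‖p + l • v‖ ≤ ‖p‖ + ‖l‖ * ‖v‖ := (norm_add_le _ _).trans_eq (by rw [norm_smul])
      _ ≤ ‖p‖ + 1 * 1 := by gcongr
      _ < _ := by linarith
  have hcauchy := norm_fderiv_apply_le_of_unit_disc
    (fun l hl => (hg.analytic _ (hmem l hl)).differentiableAt.sub hprod.differentiableAt)
    (fun l hl => hg.norm_sub_le _ (hmem l hl))
  rwa [fderiv_sub (hg.analyticAt hp).differentiableAt hprod.differentiableAt, sub_apply,
    ← (hprod p).lineDeriv_eq_fderiv, hβ.lineDeriv] at hcauchy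

lemma norm_fderiv_single_snd_sub_le (hg : NearProdSum m g) (hp : ‖p‖ < 4 ^ (m + 1) + 1) :
    ‖fderiv ℂ g p (0, Pi.single 0 1) - ∏ i, Fin.tail p.2 i‖ ≤ (1 / 4) ^ (m + 1) :=
  hg.norm_fderiv_sub_le hp (by simp [Prod.norm_def, Pi.norm_single])
    (hasLineDerivAt_prodSum_single_snd p)

lemma fderiv_single_fst_ne_zero (hg : NearProdSum m g) (hp : ‖p‖ < 4 ^ (m + 1) + 1)
    (htail : Fin.tail p.1 ∈ polyAnn m) : fderiv ℂ g p (Pi.single 0 1, 0) ≠ 0 := fun hzero => by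
  have hle := hg.norm_fderiv_sub_le hp (by simp [Prod.norm_def, Pi.norm_single])
    (hasLineDerivAt_prodSum_single_fst p)
  rw [hzero, zero_sub, norm_neg] at hle
  exact hle.not_gt (quarter_pow_lt_norm_prod htail)

lemma fderiv_single_snd_ne_zero (hg : NearProdSum m g) (hp : ‖p‖ < 4 ^ (m + 1) + 1)
    (htail : Fin.tail p.2 ∈ polyAnn m) : fderiv ℂ g p (0, Pi.single 0 1) ≠ 0 := fun hzero => by
  have hle := hg.norm_fderiv_single_snd_sub_le hp
  rw [hzero, zero_sub, norm_neg] at hle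
  exact hle.not_gt (quarter_pow_lt_norm_prod htail)

end NearProdSum

end NearProdSum

section Solution

open scoped NNReal

variable {m : ℕ} {g : (Fin (m + 1) → ℂ) × (Fin (m + 1) → ℂ) → ℂ}
  {κ : (Fin (m + 1) → ℂ) × (Fin m → ℂ) → ℂ} {u u' : ℂ} {y : (Fin (m + 1) → ℂ) × (Fin m → ℂ)}

/-- The domain of the pairs `(b, x)` over which `g (b, (u, x)) = 0` is solved for `u`. -/
def paramDomain (m : ℕ) : Set ((Fin (m + 1) → ℂ) × (Fin m → ℂ)) := Metric.ball 0 2 ×ˢ polyAnn m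

lemma isOpen_paramDomain (m : ℕ) : IsOpen (paramDomain m) :=
  Metric.isOpen_ball.prod (isOpen_polyAnn m)

/-- The point `(b, (κ (b, x), x))` of the graph of `κ` over `y = (b, x)`. -/
noncomputable def solPt (κ : (Fin (m + 1) → ℂ) × (Fin m → ℂ) → ℂ)
    (y : (Fin (m + 1) → ℂ) × (Fin m → ℂ)) : (Fin (m + 1) → ℂ) × (Fin (m + 1) → ℂ) :=
  (y.1, consL m (κ y, y.2))

/-- `κ` solves `g (b, (u, x)) = 0` for `u` with `‖u‖ < 4 ^ (m + 1)`, holomorphically in `(b, x)`. -/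
structure IsSolution (g : (Fin (m + 1) → ℂ) × (Fin (m + 1) → ℂ) → ℂ)
    (κ : (Fin (m + 1) → ℂ) × (Fin m → ℂ) → ℂ) : Prop where
  analytic : AnalyticOnNhd ℂ κ (paramDomain m)
  norm_lt : ∀ y ∈ paramDomain m, ‖κ y‖ < 4 ^ (m + 1)
  zero : ∀ y ∈ paramDomain m, g (solPt κ y) = 0

lemma norm_mk_consL_lt (hy : y ∈ paramDomain m) (hu : ‖u‖ < 4 ^ (m + 1) + 1) :
    ‖(y.1, consL m (u, y.2))‖ < 4 ^ (m + 1) + 1 := by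
  have hfour := four_le_four_pow m
  refine max_lt (by linarith [mem_ball_zero_iff.1 hy.1]) (norm_lt_of_tail (by linarith) ?_ ?_)
  · simpa
  · intro i
    simpa using (mem_polyAnn.1 hy.2 i).2.trans (by linarith)

namespace NearProdSum

lemma hasDerivAt_consL (hg : NearProdSum m g) (hy : y ∈ paramDomain m)
    (hu : ‖u‖ < 4 ^ (m + 1) + 1) :
    HasDerivAt (fun u => g (y.1, consL m (u, y.2)))
      (fderiv ℂ g (y.1, consL m (u, y.2)) (0, Pi.single 0 1)) u := by
  have hline : HasDerivAt (fun u : ℂ => (y.1, consL m (0, y.2) + u • Pi.single 0 1))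
      (0, Pi.single 0 1) u := by
    simpa using (hasDerivAt_const u y.1).prodMk
      (((hasDerivAt_id u).smul_const (Pi.single 0 1)).const_add (consL m (0, y.2)))
  simp only [consL_add_smul_single, zero_add] at hline
  exact (hg.analyticAt
    (norm_mk_consL_lt hy hu)).differentiableAt.hasFDerivAt.comp_hasDerivAt u hline

lemma approximatesLinearOn_consL (hg : NearProdSum m g) (hy : y ∈ paramDomain m) :
    ApproximatesLinearOn (fun u => g (y.1, consL m (u, y.2)))
      (ContinuousLinearMap.toSpanSingleton ℂ (∏ i, y.2 i)) (Metric.closedBall 0 (4 ^ (m + 1)))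
      ((1 / 4) ^ (m + 1) : ℝ≥0) := by
  have hlt : ∀ u ∈ Metric.closedBall (0 : ℂ) (4 ^ (m + 1)), ‖u‖ < 4 ^ (m + 1) + 1 := fun u hu => by
    linarith [mem_closedBall_zero_iff.1 hu]
  refine approximatesLinearOn_of_norm_deriv_sub_le (convex_closedBall _ _)
    (fun u hu => hg.hasDerivAt_consL hy (hlt u hu)) fun u hu => ?_
  simpa using hg.norm_fderiv_single_snd_sub_le (norm_mk_consL_lt hy (hlt u hu))

lemma eq_of_zero (hg : NearProdSum m g) (hy : y ∈ paramDomain m) (hu : ‖u‖ ≤ 4 ^ (m + 1))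
    (hu' : ‖u'‖ ≤ 4 ^ (m + 1)) (hzero : g (y.1, consL m (u, y.2)) = 0)
    (hzero' : g (y.1, consL m (u', y.2)) = 0) : u = u' :=
  injOn_of_approximatesLinearOn_toSpanSingleton (hg.approximatesLinearOn_consL hy)
    (by simpa using quarter_pow_lt_norm_prod hy.2) (mem_closedBall_zero_iff.2 hu)
    (mem_closedBall_zero_iff.2 hu') (hzero.trans hzero'.symm)

lemma norm_consL_zero_le (hg : NearProdSum m g) (hy : y ∈ paramDomain m) :
    ‖g (y.1, consL m (0, y.2))‖ ≤ (‖∏ i, y.2 i‖ - (1 / 4) ^ (m + 1)) * (3 * 4 ^ m) := by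
  have hb : ‖y.1‖ ≤ 2 := (mem_ball_zero_iff.1 hy.1).le
  have hclose := hg.norm_sub_le (y.1, consL m (0, y.2)) (mem_ball_zero_iff.2
    ((norm_mk_consL_lt hy (by rw [norm_zero]; positivity)).trans (by linarith)))
  rw [prodSum, prod_consL, zero_mul, add_zero] at hclose
  have hpow : (1 / 2 : ℝ) ^ m * 4 ^ m = 2 ^ m := by rw [← mul_pow]; norm_num
  calc ‖g (y.1, consL m (0, y.2))‖ ≤ (1 / 4) ^ (m + 1) + 2 ^ (m + 1) := by
        linarith [norm_sub_norm_le (g (y.1, consL m (0, y.2))) (∏ i, y.1 i), norm_prod_le_pow hb]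
    _ ≤ 9 / 4 * 2 ^ m := by
        have hone : (1 : ℝ) ≤ 2 ^ m := one_le_pow₀ (by norm_num)
        rw [pow_succ 2]
        linarith [quarter_pow_le m]
    _ = (1 / 2) ^ m * (3 / 4) * (3 * 4 ^ m) := by rw [← hpow]; ring
    _ ≤ _ := by gcongr; exact le_norm_prod_sub_quarter_pow hy.2

lemma exists_zero (hg : NearProdSum m g) (hy : y ∈ paramDomain m) :
    ∃ u : ℂ, ‖u‖ < 4 ^ (m + 1) ∧ g (y.1, consL m (u, y.2)) = 0 := by
  have hlt : (3 * 4 ^ m : ℝ) < 4 ^ (m + 1) := by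
    have hpos : (0 : ℝ) < 4 ^ m := by positivity
    rw [pow_succ]
    linarith
  have happrox := (hg.approximatesLinearOn_consL hy).mono_set
    (Metric.closedBall_subset_closedBall hlt.le)
  have hne : ∏ i, y.2 i ≠ 0 :=
    norm_pos_iff.1 (lt_trans (by positivity) (quarter_pow_lt_norm_prod hy.2))
  obtain ⟨u, hu, hzero⟩ := exists_zero_of_approximatesLinearOn_toSpanSingleton (by positivity)
    happrox hne (by simpa using hg.norm_consL_zero_le hy)
  exact ⟨u, (mem_closedBall_zero_iff.1 hu).trans_lt hlt, hzero⟩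

lemma exists_isSolution (hg : NearProdSum m g) : ∃ κ, IsSolution g κ := by
  choose! κ hκ using fun y (hy : y ∈ paramDomain m) => hg.exists_zero hy
  refine ⟨κ, fun y hy => ?_, fun y hy => (hκ y hy).1, fun y hy => (hκ y hy).2⟩
  obtain ⟨hlt, hzero⟩ := hκ y hy
  let f : ((Fin (m + 1) → ℂ) × (Fin m → ℂ)) × ℂ → ℂ := fun q => g (q.1.1, consL m (q.2, q.1.2))
  have hfa : AnalyticAt ℂ f (y, κ y) :=
    (hg.analyticAt (norm_mk_consL_lt hy (by linarith))).fun_comp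
      (f := fun q : ((Fin (m + 1) → ℂ) × (Fin m → ℂ)) × ℂ => (q.1.1, consL m (q.2, q.1.2)))
      ((analyticAt_fst.fun_comp analyticAt_fst).prod (((consL m).analyticAt _).fun_comp
        (analyticAt_snd.prod (analyticAt_snd.fun_comp analyticAt_fst))))
  have hfd : fderiv ℂ f (y, κ y) (0, 1) =
      fderiv ℂ g (y.1, consL m (κ y, y.2)) (0, Pi.single 0 1) :=
    (hfa.differentiableAt.hasFDerivAt.comp_hasDerivAt (κ y)
      ((hasDerivAt_const (κ y) y).prodMk (hasDerivAt_id (κ y)))).unique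
      (hg.hasDerivAt_consL hy (by linarith))
  refine analyticAt_of_eventually_unique_zero hfa hzero ?_
    (Metric.isOpen_ball.mem_nhds (mem_ball_zero_iff.2 hlt)) ?_
  · rw [hfd]
    exact hg.fderiv_single_snd_ne_zero (norm_mk_consL_lt hy (by linarith)) (by simpa using hy.2)
  · filter_upwards [(isOpen_paramDomain m).mem_nhds hy] with y' hy' u hu hu0
    exact hg.eq_of_zero hy' (mem_ball_zero_iff.1 hu).le (hκ y' hy').1.le hu0 (hκ y' hy').2

end NearProdSum

namespace IsSolution

lemma norm_solPt_lt (hκ : IsSolution g κ) (hy : y ∈ paramDomain m) :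
    ‖solPt κ y‖ < 4 ^ (m + 1) + 1 :=
  norm_mk_consL_lt hy (by linarith [hκ.norm_lt y hy])

lemma solPt_eq (hκ : IsSolution g κ) (hg : NearProdSum m g) (hy : y ∈ paramDomain m)
    (hu : ‖u‖ ≤ 4 ^ (m + 1)) (hzero : g (y.1, consL m (u, y.2)) = 0) :
    solPt κ y = (y.1, consL m (u, y.2)) := by
  rw [hg.eq_of_zero hy hu (hκ.norm_lt y hy).le hzero (hκ.zero y hy), solPt]

lemma hasFDerivAt_solPt (hκ : IsSolution g κ) (hy : y ∈ paramDomain m) :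
    HasFDerivAt (solPt κ) ((ContinuousLinearMap.fst ℂ _ _).prod
      (consL m ∘L (fderiv ℂ κ y).prod (ContinuousLinearMap.snd ℂ _ _))) y :=
  hasFDerivAt_fst.prodMk ((consL m).hasFDerivAt.comp y
    ((hκ.analytic y hy).differentiableAt.hasFDerivAt.prodMk hasFDerivAt_snd))

lemma analyticAt_solPt (hκ : IsSolution g κ) (hy : y ∈ paramDomain m) :
    AnalyticAt ℂ (solPt κ) y :=
  analyticAt_fst.prod (((consL m).analyticAt _).fun_comp ((hκ.analytic y hy).prod analyticAt_snd))

lemma fderiv_apply_solPt (hκ : IsSolution g κ) (hg : NearProdSum m g) (hy : y ∈ paramDomain m)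
    (η : (Fin (m + 1) → ℂ) × (Fin m → ℂ)) :
    fderiv ℂ g (solPt κ y) (η.1, consL m (fderiv ℂ κ y η, η.2)) = 0 := by
  have hcomp := (hg.analyticAt (hκ.norm_solPt_lt hy)).differentiableAt.hasFDerivAt.comp y
    (hκ.hasFDerivAt_solPt hy)
  have hconst : g ∘ solPt κ =ᶠ[𝓝 y] fun _ => 0 :=
    eventually_of_mem ((isOpen_paramDomain m).mem_nhds hy) hκ.zero
  exact congrArg (· η)
    (hcomp.unique ((hasFDerivAt_const (0 : ℂ) y).congr_of_eventuallyEq hconst))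

end IsSolution

end Solution

section LeviTerm

variable {m : ℕ} {g : (Fin (m + 1) → ℂ) × (Fin (m + 1) → ℂ) → ℂ}
  {κ : (Fin (m + 1) → ℂ) × (Fin m → ℂ) → ℂ}

/-- The mixed second derivative of `g` at `q` on a pair of vectors tangent to the level set of `g`,
one in the `w`-directions and one in the `z`-directions. Its vanishing for all `v` and `ζ` is the
complexified Levi condition. -/
noncomputable def leviTerm (g : (Fin (m + 1) → ℂ) × (Fin (m + 1) → ℂ) → ℂ)
    (v ζ : Fin (m + 1) → ℂ) (q : (Fin (m + 1) → ℂ) × (Fin (m + 1) → ℂ)) : ℂ :=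
  fderiv ℂ (fderiv ℂ g) q (kerProj (fderiv ℂ g q) (0, Pi.single 0 1) (0, ζ))
    (kerProj (fderiv ℂ g q) (Pi.single 0 1, 0) (v, 0))

lemma analyticAt_leviTerm {q : (Fin (m + 1) → ℂ) × (Fin (m + 1) → ℂ)} (hg : AnalyticAt ℂ g q)
    (v ζ : Fin (m + 1) → ℂ) : AnalyticAt ℂ (leviTerm g v ζ) q := by
  have hker : ∀ e a, AnalyticAt ℂ (fun q => kerProj (fderiv ℂ g q) e a) q := fun e a =>
    ((analyticAt_fderiv_apply hg analyticAt_id e).smul analyticAt_const).sub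
      ((analyticAt_fderiv_apply hg analyticAt_id a).smul analyticAt_const)
  exact analyticAt_clm_apply (analyticAt_clm_apply hg.fderiv.fderiv (hker _ _)) (hker _ _)

/-- The Levi condition at the point `z` of `{g (z, z̄) = 0}`, in polarised form: the mixed second
derivative of `g` vanishes on `ker ∂_z g × ker ∂_w g` unless `∂_z g = 0`. -/
def IsPolarLeviFlatAt {n : ℕ} (g : (Fin n → ℂ) × (Fin n → ℂ) → ℂ) (z : Fin n → ℂ) : Prop :=
  g (z, star z) = 0 → (∃ v, fderiv ℂ g (z, star z) (v, 0) ≠ 0) → ∀ a b, a.2 = 0 → b.1 = 0 →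
    fderiv ℂ g (z, star z) a = 0 → fderiv ℂ g (z, star z) b = 0 →
      fderiv ℂ (fderiv ℂ g) (z, star z) b a = 0

/-- A perturbation of `prodSum` that is the complexification of a Levi-flat equation. -/
structure LeviNearProdSum (m : ℕ) (g : (Fin (m + 1) → ℂ) × (Fin (m + 1) → ℂ) → ℂ) : Prop
    extends NearProdSum m g where
  im_eq_zero : ∀ z : Fin (m + 1) → ℂ, ‖z‖ < 4 ^ (m + 1) + 2 → (g (z, star z)).im = 0
  levi : ∀ z : Fin (m + 1) → ℂ, ‖z‖ < 4 ^ (m + 1) + 2 → IsPolarLeviFlatAt g z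

lemma LeviNearProdSum.leviTerm_mk_star_eq_zero (hg : LeviNearProdSum m g) {z : Fin (m + 1) → ℂ}
    (hz : ‖z‖ < 4 ^ (m + 1) + 2) (hzero : g (z, star z) = 0) (v ζ : Fin (m + 1) → ℂ) :
    leviTerm g v ζ (z, star z) = 0 := by
  by_cases hv : ∃ v, fderiv ℂ g (z, star z) (v, 0) ≠ 0
  · exact hg.levi z hz hzero hv _ _ (by simp [kerProj]) (by simp [kerProj]) (map_kerProj _ _ _)
      (map_kerProj _ _ _)
  · push Not at hv
    simp [leviTerm, kerProj, hv]

/-- A neighbourhood of the point `(i, 1, …, 1)`. -/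
def baseRegion (m : ℕ) : Set (Fin (m + 1) → ℂ) :=
  {b | b 0 ∈ Metric.ball Complex.I (1 / 2) ∧ Fin.tail b ∈ polyAnn m}

lemma isOpen_baseRegion (m : ℕ) : IsOpen (baseRegion m) := by
  have htail : Continuous fun b : Fin (m + 1) → ℂ => Fin.tail b := by unfold Fin.tail; fun_prop
  exact (Metric.isOpen_ball.preimage (continuous_apply (A := fun _ => ℂ) 0)).inter
    ((isOpen_polyAnn m).preimage htail)

lemma norm_lt_of_mem_ball_I {c : ℂ} (hc : c ∈ Metric.ball Complex.I (1 / 2)) : ‖c‖ < 3 / 2 := by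
  have hle := norm_sub_norm_le c Complex.I
  rw [Complex.norm_I] at hle
  linarith [mem_ball_iff_norm.1 hc]

lemma consL_mem_baseRegion {c : ℂ} {b' : Fin m → ℂ} (hc : c ∈ Metric.ball Complex.I (1 / 2))
    (hb' : b' ∈ polyAnn m) : consL m (c, b') ∈ baseRegion m :=
  ⟨by simpa using hc, by simpa using hb'⟩

lemma norm_lt_two_of_mem_baseRegion {b : Fin (m + 1) → ℂ} (hb : b ∈ baseRegion m) : ‖b‖ < 2 :=
  norm_lt_of_tail two_pos ((norm_lt_of_mem_ball_I hb.1).trans (by norm_num)) fun i =>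
    (mem_polyAnn.1 hb.2 i).2

lemma mk_mem_paramDomain {b : Fin (m + 1) → ℂ} {x : Fin m → ℂ} (hb : b ∈ baseRegion m)
    (hx : x ∈ polyAnn m) : (b, x) ∈ paramDomain m :=
  ⟨mem_ball_zero_iff.2 (norm_lt_two_of_mem_baseRegion hb), hx⟩

lemma prodSum_mk_star {n : ℕ} (z : Fin n → ℂ) : prodSum (z, star z) = (2 * (∏ i, z i).re : ℝ) := by
  simp [prodSum, ← map_prod, Complex.add_conj]

lemma mk_star_mem_ball {z : Fin (m + 1) → ℂ} (hz : ‖z‖ < 2) :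
    (z, star z) ∈ Metric.ball 0 (4 ^ (m + 1) + 2) := by
  rw [mem_ball_zero_iff, norm_mk_star]
  linarith [four_le_four_pow m]

lemma NearProdSum.abs_re_sub_two_mul_re_lt (hg : NearProdSum m g) {c : ℂ} {b' : Fin m → ℂ}
    (hc : c ∈ Metric.ball Complex.I (1 / 2)) (hb' : b' ∈ polyAnn m)
    (hprod : ‖∏ i, b' i - 1‖ < 1 / 16) :
    |(g (consL m (c, b'), star (consL m (c, b')))).re - 2 * c.re| < 1 / 2 := by
  have hnorm := norm_lt_two_of_mem_baseRegion (consL_mem_baseRegion hc hb')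
  have hclose := (Complex.abs_re_le_norm _).trans (hg.norm_sub_le _ (mk_star_mem_ball hnorm))
  rw [prodSum_mk_star, Complex.sub_re, Complex.ofReal_re, prod_consL] at hclose
  have hmul : |(c * ∏ i, b' i).re - c.re| ≤ 3 / 2 * (1 / 16) :=
    calc |(c * ∏ i, b' i).re - c.re| = |(c * (∏ i, b' i - 1)).re| := by
          rw [mul_sub, mul_one, Complex.sub_re]
      _ ≤ ‖c‖ * ‖∏ i, b' i - 1‖ := (Complex.abs_re_le_norm _).trans_eq (norm_mul _ _)
      _ ≤ 3 / 2 * (1 / 16) := by gcongr; exact (norm_lt_of_mem_ball_I hc).le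
  have hquarter := quarter_pow_le m
  rw [abs_le] at hclose hmul
  rw [abs_lt]
  constructor <;> linarith [hclose.1, hclose.2, hmul.1, hmul.2]

namespace IsSolution

lemma analyticAt_leviTerm_solPt (hκ : IsSolution g κ) (hg : NearProdSum m g)
    {y : (Fin (m + 1) → ℂ) × (Fin m → ℂ)} (hy : y ∈ paramDomain m) (v ζ : Fin (m + 1) → ℂ) :
    AnalyticAt ℂ (fun y => leviTerm g v ζ (solPt κ y)) y :=
  (analyticAt_leviTerm (hg.analyticAt (hκ.norm_solPt_lt hy)) v ζ).fun_comp (hκ.analyticAt_solPt hy)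

lemma leviTerm_solPt_star_eq_zero_of_zero (hκ : IsSolution g κ) (hg : LeviNearProdSum m g)
    {c : ℂ} {b' : Fin m → ℂ} (hc : c ∈ Metric.ball Complex.I (1 / 2)) (hb' : b' ∈ polyAnn m)
    (hre : (g (consL m (c, b'), star (consL m (c, b')))).re = 0) (v ζ : Fin (m + 1) → ℂ) :
    leviTerm g v ζ (solPt κ (consL m (c, b'), star b')) = 0 := by
  have hfour := four_le_four_pow m
  have hbase := consL_mem_baseRegion hc hb'
  have hnorm : ‖consL m (c, b')‖ < 4 ^ (m + 1) + 2 := by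
    linarith [norm_lt_two_of_mem_baseRegion hbase]
  have hzero : g (consL m (c, b'), star (consL m (c, b'))) = 0 :=
    Complex.ext hre (hg.im_eq_zero _ hnorm)
  have hpt : solPt κ (consL m (c, b'), star b') = (consL m (c, b'), star (consL m (c, b'))) := by
    rw [star_consL] at hzero ⊢
    refine hκ.solPt_eq hg.toNearProdSum (mk_mem_paramDomain hbase (star_mem_polyAnn hb')) ?_ hzero
    rw [norm_star]
    linarith [norm_lt_of_mem_ball_I hc]
  rw [hpt]
  exact hg.leviTerm_mk_star_eq_zero hnorm hzero v ζ

/-- For fixed `b'` with `∏ b'ᵢ ≈ 1`, every horizontal line in the `c`-plane near `i` contains a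
point where `g` vanishes and `w = z̄`, which gives infinitely many zeros of a holomorphic function
of `c`. -/
lemma leviTerm_solPt_star_eq_zero (hκ : IsSolution g κ) (hg : LeviNearProdSum m g)
    {c : ℂ} {b' : Fin m → ℂ} (hc : c ∈ Metric.ball Complex.I (1 / 2)) (hb' : b' ∈ polyAnn m)
    (hprod : ‖∏ i, b' i - 1‖ < 1 / 16) (v ζ : Fin (m + 1) → ℂ) :
    leviTerm g v ζ (solPt κ (consL m (c, b'), star b')) = 0 := by
  refine eqOn_zero_of_zeros_of_near_re
    (ρ := fun c => (g (consL m (c, b'), star (consL m (c, b')))).re)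
    (f := fun c => leviTerm g v ζ (solPt κ (consL m (c, b'), star b'))) ?_
    (fun c hc => hg.abs_re_sub_two_mul_re_lt hc hb' hprod) ?_
    (fun c hc hre => hκ.leviTerm_solPt_star_eq_zero_of_zero hg hc hb' hre v ζ) hc
  · have hcont : Continuous fun c : ℂ => (consL m (c, b'), star (consL m (c, b'))) := by fun_prop
    exact Complex.continuous_re.comp_continuousOn (hg.analytic.continuousOn.comp
      hcont.continuousOn fun c hc =>
        mk_star_mem_ball (norm_lt_two_of_mem_baseRegion (consL_mem_baseRegion hc hb')))
  · exact fun c hc => (hκ.analyticAt_leviTerm_solPt hg.toNearProdSum (mk_mem_paramDomain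
      (consL_mem_baseRegion hc hb') (star_mem_polyAnn hb')) v ζ).fun_comp
      (f := fun c : ℂ => (consL m (c, b'), star b'))
      ((((consL m).analyticAt _).fun_comp (analyticAt_id.prod analyticAt_const)).prod
        analyticAt_const)

lemma leviTerm_solPt_eq_zero (hκ : IsSolution g κ) (hg : LeviNearProdSum m g)
    {b : Fin (m + 1) → ℂ} {x : Fin m → ℂ} (hb : b ∈ baseRegion m) (hx : x ∈ polyAnn m)
    (v ζ : Fin (m + 1) → ℂ) : leviTerm g v ζ (solPt κ (b, x)) = 0 := by
  let K : (Fin m → ℂ) × (Fin m → ℂ) → ℂ := fun q =>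
    leviTerm g v ζ (solPt κ (consL m (b 0, q.1), q.2))
  have hK : AnalyticOnNhd ℂ K (polyAnn m ×ˢ polyAnn m) := fun q hq =>
    (hκ.analyticAt_leviTerm_solPt hg.toNearProdSum (mk_mem_paramDomain
      (consL_mem_baseRegion hb.1 hq.1) hq.2) v ζ).fun_comp
      (f := fun q : (Fin m → ℂ) × (Fin m → ℂ) => (consL m (b 0, q.1), q.2))
      ((((consL m).analyticAt _).fun_comp (analyticAt_const.prod analyticAt_fst)).prod
        analyticAt_snd)
  have hone := one_mem_polyAnn m
  have hnear : ∀ᶠ q in 𝓝 ((1 : Fin m → ℂ), (1 : Fin m → ℂ)), K q = 0 := by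
    have hone_star : star (1 : Fin m → ℂ) = 1 := star_one _
    nth_rewrite 2 [← hone_star]
    refine eventually_eq_zero_of_conj (hK _ (by simp [hone])) ?_
    have hcont : Continuous fun z : Fin m → ℂ => ‖∏ i, z i - 1‖ := by fun_prop
    have hprod : ∀ᶠ z : Fin m → ℂ in 𝓝 1, ‖∏ i, z i - 1‖ < 1 / 16 :=
      (hcont.tendsto 1).eventually_lt_const (by simp)
    filter_upwards [(isOpen_polyAnn m).mem_nhds hone, hprod] with z hz hzprod
    exact hκ.leviTerm_solPt_star_eq_zero hg hb.1 hz hzprod v ζ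
  have hzero := hK.eqOn_zero_of_preconnected_of_eventuallyEq_zero
    ((isPreconnected_polyAnn m).prod (isPreconnected_polyAnn m)) ⟨hone, hone⟩ hnear
    (x := (Fin.tail b, x)) ⟨hb.2, hx⟩
  simpa only [K, consL_tail, Pi.zero_apply] using hzero

end IsSolution

end LeviTerm

section FirstIntegral

variable {m : ℕ} {g : (Fin (m + 1) → ℂ) × (Fin (m + 1) → ℂ) → ℂ}
  {κ : (Fin (m + 1) → ℂ) × (Fin m → ℂ) → ℂ} {b : Fin (m + 1) → ℂ}

/-- The first integral: the `w₀`-coordinate of the point at which `{z = b}` meets the zero set of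
`g` over `w₁ = ⋯ = wₘ = 1`. -/
def firstIntegral (κ : (Fin (m + 1) → ℂ) × (Fin m → ℂ) → ℂ) (b : Fin (m + 1) → ℂ) : ℂ := κ (b, 1)

/-- The value on `v`, `v'` of the 2-form `dh ∧ ∂_z g` at `q`, for a function `h` of `z` alone. -/
noncomputable def wedgeTerm {n : ℕ} (h : (Fin n → ℂ) → ℂ) (g : (Fin n → ℂ) × (Fin n → ℂ) → ℂ)
    (v v' : Fin n → ℂ) (q : (Fin n → ℂ) × (Fin n → ℂ)) : ℂ :=
  fderiv ℂ h q.1 v * fderiv ℂ g q (v', 0) - fderiv ℂ h q.1 v' * fderiv ℂ g q (v, 0)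

lemma analyticAt_wedgeTerm {n : ℕ} {h : (Fin n → ℂ) → ℂ} {g : (Fin n → ℂ) × (Fin n → ℂ) → ℂ}
    {q : (Fin n → ℂ) × (Fin n → ℂ)} (hh : AnalyticAt ℂ h q.1) (hg : AnalyticAt ℂ g q)
    (v v' : Fin n → ℂ) : AnalyticAt ℂ (wedgeTerm h g v v') q := by
  have hfst : ∀ a, AnalyticAt ℂ (fun q : (Fin n → ℂ) × (Fin n → ℂ) => fderiv ℂ h q.1 a) q :=
    fun a => analyticAt_fderiv_apply hh analyticAt_fst a
  have hsnd : ∀ a, AnalyticAt ℂ (fun q => fderiv ℂ g q a) q := fun a =>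
    analyticAt_fderiv_apply hg analyticAt_id a
  exact ((hfst v).mul (hsnd _)).sub ((hfst v').mul (hsnd _))

namespace IsSolution

/-- Up to a nonzero factor, the derivative of this ratio in a direction `ξ` is a value of the Levi
term. -/
lemma hasFDerivAt_fderiv_div_fderiv (hκ : IsSolution g κ) (hg : LeviNearProdSum m g)
    (hb : b ∈ baseRegion m) {x : Fin m → ℂ} (hx : x ∈ polyAnn m) (v : Fin (m + 1) → ℂ) :
    HasFDerivAt (fun x => fderiv ℂ g (solPt κ (b, x)) (v, 0) /
      fderiv ℂ g (solPt κ (b, x)) (Pi.single 0 1, 0)) (0 : (Fin m → ℂ) →L[ℂ] ℂ) x := by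
  have hy := mk_mem_paramDomain hb hx
  have hlt := hκ.norm_solPt_lt hy
  have hpt := (hκ.hasFDerivAt_solPt hy).comp x ((hasFDerivAt_const b x).prodMk (hasFDerivAt_id x))
  refine hasFDerivAt_div_apply_zero
    ((hg.analyticAt hlt).fderiv.differentiableAt.hasFDerivAt.comp x hpt)
    (hg.fderiv_single_fst_ne_zero hlt hb.2) fun ξ => ?_
  have hlevi := hκ.leviTerm_solPt_eq_zero hg hb hx v (consL m (fderiv ℂ κ (b, x) (0, ξ), ξ))
  rw [leviTerm, kerProj, hκ.fderiv_apply_solPt hg.toNearProdSum hy (0, ξ), zero_smul, sub_zero,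
    map_smul, smul_apply] at hlevi
  exact (smul_eq_zero.1 hlevi).resolve_left
    (hg.fderiv_single_snd_ne_zero hlt (by simpa [solPt] using hx))

lemma exists_fderiv_fst_eq_mul (hκ : IsSolution g κ) (hg : LeviNearProdSum m g)
    (hb : b ∈ baseRegion m) {x x' : Fin m → ℂ} (hx : x ∈ polyAnn m) (hx' : x' ∈ polyAnn m) :
    ∃ c, ∀ v, fderiv ℂ g (solPt κ (b, x)) (v, 0) = c * fderiv ℂ g (solPt κ (b, x')) (v, 0) := by
  have hne : ∀ x ∈ polyAnn m, fderiv ℂ g (solPt κ (b, x)) (Pi.single 0 1, 0) ≠ 0 := fun x hx =>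
    hg.fderiv_single_fst_ne_zero (hκ.norm_solPt_lt (mk_mem_paramDomain hb hx)) hb.2
  refine ⟨fderiv ℂ g (solPt κ (b, x)) (Pi.single 0 1, 0) /
    fderiv ℂ g (solPt κ (b, x')) (Pi.single 0 1, 0), fun v => ?_⟩
  have hderiv := fun x hx => hκ.hasFDerivAt_fderiv_div_fderiv hg hb (x := x) hx v
  have hratio := (isOpen_polyAnn m).is_const_of_fderiv_eq_zero (isPreconnected_polyAnn m)
    (fun x hx => (hderiv x hx).differentiableAt.differentiableWithinAt)
    (fun x hx => (hderiv x hx).fderiv) hx hx'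
  rw [div_eq_div_iff (hne x hx) (hne x' hx')] at hratio
  rw [div_mul_eq_mul_div, eq_div_iff (hne x' hx')]
  linear_combination hratio

lemma hasFDerivAt_firstIntegral (hκ : IsSolution g κ) (hb : ‖b‖ < 2) :
    HasFDerivAt (firstIntegral κ)
      (fderiv ℂ κ (b, 1) ∘L ContinuousLinearMap.inl ℂ (Fin (m + 1) → ℂ) (Fin m → ℂ)) b :=
  (hκ.analytic (b, 1) ⟨mem_ball_zero_iff.2 hb, one_mem_polyAnn m⟩).differentiableAt.hasFDerivAt.comp
    b ((hasFDerivAt_id b).prodMk (hasFDerivAt_const 1 b))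

lemma analyticOnNhd_firstIntegral (hκ : IsSolution g κ) :
    AnalyticOnNhd ℂ (firstIntegral κ) (Metric.ball 0 2) := fun b hb =>
  (hκ.analytic (b, 1) ⟨hb, one_mem_polyAnn m⟩).fun_comp (f := fun b => (b, 1))
    (analyticAt_id.prod analyticAt_const)

lemma fderiv_firstIntegral_mul (hκ : IsSolution g κ) (hg : NearProdSum m g) (hb : ‖b‖ < 2)
    (v : Fin (m + 1) → ℂ) :
    fderiv ℂ (firstIntegral κ) b v * fderiv ℂ g (solPt κ (b, 1)) (0, Pi.single 0 1) =
      -fderiv ℂ g (solPt κ (b, 1)) (v, 0) := by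
  have htangent := hκ.fderiv_apply_solPt hg (y := (b, 1))
    ⟨mem_ball_zero_iff.2 hb, one_mem_polyAnn m⟩ (v, 0)
  have hsplit : ∀ k : ℂ, ((v, consL m (k, 0)) : (Fin (m + 1) → ℂ) × (Fin (m + 1) → ℂ)) =
      (v, 0) + k • (0, Pi.single 0 1) := fun k => by
    have hcons := consL_add_smul_single (m := m) 0 k 0
    rw [Prod.mk_zero_zero, map_zero, zero_add, zero_add] at hcons
    simp [hcons]
  rw [hsplit, map_add, map_smul, smul_eq_mul] at htangent
  rw [(hκ.hasFDerivAt_firstIntegral hb).fderiv]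
  exact eq_neg_of_add_eq_zero_right htangent

lemma wedgeTerm_eq_zero (hκ : IsSolution g κ) (hg : LeviNearProdSum m g)
    (hb : b ∈ baseRegion m) {w : Fin (m + 1) → ℂ} (hw : Fin.tail w ∈ polyAnn m)
    (hw₀ : ‖w 0‖ ≤ 4 ^ (m + 1)) (hzero : g (b, w) = 0) (v v' : Fin (m + 1) → ℂ) :
    wedgeTerm (firstIntegral κ) g v v' (b, w) = 0 := by
  have hone := one_mem_polyAnn m
  have hpt := hκ.solPt_eq hg.toNearProdSum (mk_mem_paramDomain hb hw) hw₀
    (by simpa only [consL_tail] using hzero)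
  rw [consL_tail] at hpt
  obtain ⟨c, hc⟩ := hκ.exists_fderiv_fst_eq_mul hg hb hw hone
  rw [hpt] at hc
  have himplicit := hκ.fderiv_firstIntegral_mul hg.toNearProdSum (norm_lt_two_of_mem_baseRegion hb)
  refine (mul_eq_zero.1 ?_).resolve_right (hg.fderiv_single_snd_ne_zero
    (hκ.norm_solPt_lt (mk_mem_paramDomain hb hone)) (by simpa [solPt] using hone))
  rw [wedgeTerm, hc, hc]
  linear_combination c * fderiv ℂ g (solPt κ (b, 1)) (v', 0) * himplicit v -
    c * fderiv ℂ g (solPt κ (b, 1)) (v, 0) * himplicit v'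

end IsSolution

end FirstIntegral

section Continuation

variable {m : ℕ} {g : (Fin (m + 1) → ℂ) × (Fin (m + 1) → ℂ) → ℂ}
  {κ : (Fin (m + 1) → ℂ) × (Fin m → ℂ) → ℂ}
  {y : (Fin (m + 1) → ℂ) × (Fin (m + 1) → ℂ)} {t : ℂ}

/-- The point `(i, 1, …, 1)`. -/
noncomputable def basePt (m : ℕ) : Fin (m + 1) → ℂ := consL m (Complex.I, 1)

lemma norm_basePt_lt (m : ℕ) : ‖basePt m‖ < 3 / 2 :=
  norm_lt_of_tail (by norm_num) (by norm_num [basePt]) fun i => by norm_num [basePt]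

lemma basePt_mem_baseRegion (m : ℕ) : basePt m ∈ baseRegion m :=
  consL_mem_baseRegion (by simp) (one_mem_polyAnn m)

lemma IsSolution.fderiv_firstIntegral_basePt_ne_zero (hκ : IsSolution g κ)
    (hg : NearProdSum m g) : fderiv ℂ (firstIntegral κ) (basePt m) ≠ 0 := fun hzero => by
  have hbase := basePt_mem_baseRegion m
  have himplicit := hκ.fderiv_firstIntegral_mul hg (norm_lt_two_of_mem_baseRegion hbase)
    (Pi.single 0 1)
  rw [hzero, zero_apply, zero_mul, zero_eq_neg] at himplicit
  exact hg.fderiv_single_fst_ne_zero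
    (hκ.norm_solPt_lt (mk_mem_paramDomain hbase (one_mem_polyAnn m))) hbase.2 himplicit

/-- The point `(b, c + t (1, …, 1))` as a continuous linear function of `((b, c), t)`. -/
noncomputable def diagPt (n : ℕ) :
    ((Fin n → ℂ) × (Fin n → ℂ)) × ℂ →L[ℂ] (Fin n → ℂ) × (Fin n → ℂ) :=
  .fst ℂ _ _ + (ContinuousLinearMap.snd ℂ _ _).smulRight (0, 1)

lemma diagPt_apply {n : ℕ} (y : (Fin n → ℂ) × (Fin n → ℂ)) (t : ℂ) :
    diagPt n (y, t) = (y.1, y.2 + t • 1) := by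
  ext <;> simp [diagPt]

/-- A convex set of pairs `(b, c)`, containing `(basePt m, 0)` and a neighbourhood of `0`, over
which the zeros of `t ↦ g (b, c + t (1, …, 1))` stay away from the circle `‖t‖ = 3`. -/
def diagDomain (m : ℕ) : Set ((Fin (m + 1) → ℂ) × (Fin (m + 1) → ℂ)) :=
  Metric.ball 0 (3 / 2) ×ˢ Metric.ball 0 (1 / 4)

lemma isOpen_diagDomain (m : ℕ) : IsOpen (diagDomain m) :=
  Metric.isOpen_ball.prod Metric.isOpen_ball

lemma basePt_mem_diagDomain (m : ℕ) : (basePt m, 0) ∈ diagDomain m :=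
  ⟨mem_ball_zero_iff.2 (norm_basePt_lt m), Metric.mem_ball_self (by norm_num)⟩

lemma norm_diagPt_lt (hy : y ∈ diagDomain m) (ht : ‖t‖ ≤ 3) :
    ‖diagPt (m + 1) (y, t)‖ < 4 ^ (m + 1) + 1 := by
  have hfour := four_le_four_pow m
  have hfst := mem_ball_zero_iff.1 hy.1
  have hsnd := mem_ball_zero_iff.1 hy.2
  rw [diagPt_apply]
  refine max_lt (by linarith) ?_
  calc ‖y.2 + t • (1 : Fin (m + 1) → ℂ)‖ ≤ ‖y.2‖ + ‖t‖ := by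
        simpa [norm_smul] using norm_add_le y.2 (t • (1 : Fin (m + 1) → ℂ))
    _ < _ := by linarith

namespace NearProdSum

lemma diagPt_ne_zero (hg : NearProdSum m g) (hy : y ∈ diagDomain m) (ht : ‖t‖ = 3) :
    g (diagPt (m + 1) (y, t)) ≠ 0 := fun hzero => by
  have hle := hg.norm_prodSum_le_of_zero (norm_diagPt_lt hy ht.le) hzero
  rw [diagPt_apply, prodSum, add_comm (∏ i, _)] at hle
  have hsnd := mem_ball_zero_iff.1 hy.2
  have hupper := norm_prod_le_pow (mem_ball_zero_iff.1 hy.1).le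
  have hlower : (11 / 4 : ℝ) ^ (m + 1) ≤ ‖∏ i, (y.2 + t • (1 : Fin (m + 1) → ℂ)) i‖ := by
    refine pow_le_norm_prod (by norm_num) fun i => ?_
    have htri := norm_sub_le_norm_add t (y.2 i)
    simp only [Pi.add_apply, Pi.smul_apply, Pi.one_apply, smul_eq_mul, mul_one]
    rw [add_comm]
    linarith [norm_le_pi_norm y.2 i]
  have htri := norm_sub_le_norm_add (∏ i, (y.2 + t • (1 : Fin (m + 1) → ℂ)) i) (∏ i, y.1 i)
  have hmono : (3 / 2 : ℝ) ^ m ≤ (11 / 4) ^ m :=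
    pow_le_pow_left₀ (by norm_num) (by norm_num) m
  have hone : (1 : ℝ) ≤ (3 / 2) ^ m := one_le_pow₀ (by norm_num)
  rw [pow_succ] at hupper hlower
  linarith [quarter_pow_le m]

lemma norm_pow_sub_one_le_of_zero_basePt (hg : NearProdSum m g) (ht : ‖t‖ ≤ 3)
    (hzero : g (diagPt (m + 1) ((basePt m, 0), t)) = 0) :
    |‖t‖ ^ (m + 1) - 1| ≤ (1 / 4) ^ (m + 1) := by
  have hle := hg.norm_prodSum_le_of_zero (norm_diagPt_lt (basePt_mem_diagDomain m) ht) hzero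
  simp only [diagPt_apply, prodSum, basePt, prod_consL, zero_add, Pi.smul_apply, Pi.one_apply,
    Finset.prod_const_one, smul_eq_mul, mul_one, Fin.prod_const] at hle
  simpa [add_comm] using (abs_norm_sub_norm_le (t ^ (m + 1)) (-Complex.I)).trans
    (by simpa [add_comm] using hle)

lemma norm_mem_Ioo_of_zero_basePt (hg : NearProdSum m g) (ht : ‖t‖ ≤ 3)
    (hzero : g (diagPt (m + 1) ((basePt m, 0), t)) = 0) : ‖t‖ ∈ Set.Ioo (1 / 2) 2 := by
  have hpow := abs_le.1 ((hg.norm_pow_sub_one_le_of_zero_basePt ht hzero).trans (quarter_pow_le m))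
  constructor
  · refine lt_of_pow_lt_pow_left₀ (m + 1) (norm_nonneg t) ?_
    have hhalf : (1 / 2 : ℝ) ^ m ≤ 1 := pow_le_one₀ (by norm_num) (by norm_num)
    rw [pow_succ (1 / 2 : ℝ)]
    linarith
  · refine lt_of_pow_lt_pow_left₀ (m + 1) zero_le_two ?_
    have htwo : (1 : ℝ) ≤ 2 ^ m := one_le_pow₀ one_le_two
    rw [pow_succ (2 : ℝ)]
    linarith

end NearProdSum

lemma hasLineDerivAt_prodSum_diag {n : ℕ} (b : Fin n → ℂ) (t : ℂ) :
    HasLineDerivAt ℂ prodSum (n * t ^ (n - 1)) (diagPt n ((b, 0), t)) (0, 1) := by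
  have hderiv := (((hasDerivAt_id (0 : ℂ)).const_add t).pow n).const_add (∏ i, b i)
  simp only [id_eq, add_zero, mul_one] at hderiv
  refine hderiv.congr_of_eventuallyEq (Eventually.of_forall fun l => ?_)
  simp [diagPt_apply, prodSum]

namespace NearProdSum

lemma fderiv_diag_ne_zero_of_zero_basePt (hg : NearProdSum m g) (ht : ‖t‖ ≤ 3)
    (hzero : g (diagPt (m + 1) ((basePt m, 0), t)) = 0) :
    fderiv ℂ g (diagPt (m + 1) ((basePt m, 0), t)) (0, 1) ≠ 0 := fun hcrit => by
  have hle := hg.norm_fderiv_sub_le (norm_diagPt_lt (basePt_mem_diagDomain m) ht)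
    (by simp [Prod.norm_def]) (hasLineDerivAt_prodSum_diag (basePt m) t)
  rw [hcrit, zero_sub, norm_neg, norm_mul, norm_pow, Complex.norm_natCast,
    Nat.add_sub_cancel] at hle
  have hpow := (abs_le.1 (hg.norm_pow_sub_one_le_of_zero_basePt ht hzero)).1
  have htwo : ‖t‖ ^ (m + 1) ≤ ‖t‖ ^ m * 2 := by
    rw [pow_succ]
    gcongr
    exact (hg.norm_mem_Ioo_of_zero_basePt ht hzero).2.le
  have hdegree : ‖t‖ ^ m ≤ (m + 1 : ℕ) * ‖t‖ ^ m :=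
    le_mul_of_one_le_left (by positivity) (by norm_num)
  linarith [quarter_pow_le m]

lemma hasDerivAt_diagPt (hg : NearProdSum m g) (hy : y ∈ diagDomain m) (ht : ‖t‖ ≤ 3) :
    HasDerivAt (fun t => g (diagPt (m + 1) (y, t)))
      (fderiv ℂ g (diagPt (m + 1) (y, t)) (0, 1)) t := by
  have hline : HasDerivAt (fun t => diagPt (m + 1) (y, t)) (diagPt (m + 1) (0, 1)) t :=
    (diagPt (m + 1)).hasFDerivAt.comp_hasDerivAt t ((hasDerivAt_const t y).prodMk (hasDerivAt_id t))
  rw [diagPt_apply 0, Prod.fst_zero, Prod.snd_zero, zero_add, one_smul] at hline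
  exact (hg.analyticAt (norm_diagPt_lt hy ht)).differentiableAt.hasFDerivAt.comp_hasDerivAt t hline

lemma eventually_of_zero_diagPt (hg : NearProdSum m g) :
    ∀ᶠ y in 𝓝 (basePt m, 0), ∀ t ∈ Metric.closedBall 0 3, g (diagPt (m + 1) (y, t)) = 0 →
      Fin.tail (diagPt (m + 1) (y, t)).2 ∈ polyAnn m ∧
        fderiv ℂ g (diagPt (m + 1) (y, t)) (0, 1) ≠ 0 := by
  refine (isCompact_closedBall (0 : ℂ) 3).eventually_forall_of_forall_eventually fun t ht => ?_
  rw [mem_closedBall_zero_iff] at ht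
  have hga := hg.analyticAt (norm_diagPt_lt (basePt_mem_diagDomain m) ht)
  by_cases hzero : g (diagPt (m + 1) ((basePt m, 0), t)) = 0
  · have htail : Continuous fun q => Fin.tail (diagPt (m + 1) q).2 := by unfold Fin.tail; fun_prop
    have hmem : Fin.tail (diagPt (m + 1) ((basePt m, 0), t)).2 ∈ polyAnn m := by
      simpa [mem_polyAnn, diagPt_apply, Fin.tail] using
        fun _ => hg.norm_mem_Ioo_of_zero_basePt ht hzero
    have hcrit := (analyticAt_fderiv_apply hga ((diagPt (m + 1)).analyticAt _) (0, 1)).continuousAt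
    filter_upwards [htail.continuousAt.eventually_mem ((isOpen_polyAnn m).mem_nhds hmem),
      hcrit.eventually_ne (hg.fderiv_diag_ne_zero_of_zero_basePt ht hzero)] with q hq hqcrit _
    exact ⟨hq, hqcrit⟩
  · filter_upwards [(hga.fun_comp ((diagPt (m + 1)).analyticAt _)).continuousAt.eventually_ne hzero]
      with q hq hqzero
    exact absurd hqzero hq

end NearProdSum

namespace IsSolution

lemma eventually_wedgeTerm_diagPt_eq_zero (hκ : IsSolution g κ) (hg : LeviNearProdSum m g)
    (v v' : Fin (m + 1) → ℂ) :
    ∀ᶠ y in 𝓝 (basePt m, 0), ∀ t ∈ Metric.closedBall 0 3, g (diagPt (m + 1) (y, t)) = 0 →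
      wedgeTerm (firstIntegral κ) g v v' (diagPt (m + 1) (y, t)) = 0 ∧
        deriv (fun t => g (diagPt (m + 1) (y, t))) t ≠ 0 := by
  filter_upwards [hg.eventually_of_zero_diagPt,
    (isOpen_diagDomain m).mem_nhds (basePt_mem_diagDomain m),
    continuousAt_fst.eventually_mem ((isOpen_baseRegion m).mem_nhds (basePt_mem_baseRegion m))]
    with y hzeros hy hbase t ht hzero
  obtain ⟨htail, hcrit⟩ := hzeros t ht hzero
  rw [mem_closedBall_zero_iff] at ht
  rw [(hg.hasDerivAt_diagPt hy ht).deriv]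
  refine ⟨?_, hcrit⟩
  have hcoord : ‖y.2 0 + t‖ ≤ 4 ^ (m + 1) := by
    linarith [norm_add_le (y.2 0) t, norm_le_pi_norm y.2 0, mem_ball_zero_iff.1 hy.2,
      four_le_four_pow m]
  rw [diagPt_apply] at htail hzero ⊢
  exact hκ.wedgeTerm_eq_zero hg hbase htail (by simpa using hcoord) hzero v v'

lemma wedgeTerm_eq_zero_of_norm_lt (hκ : IsSolution g κ) (hg : LeviNearProdSum m g)
    {b w : Fin (m + 1) → ℂ} (hb : ‖b‖ < 3 / 2) (hw : ‖w‖ < 1 / 4) (hzero : g (b, w) = 0)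
    (v v' : Fin (m + 1) → ℂ) : wedgeTerm (firstIntegral κ) g v v' (b, w) = 0 := by
  have hga : ∀ q ∈ diagDomain m ×ˢ Metric.closedBall 0 3, AnalyticAt ℂ g (diagPt (m + 1) q) :=
    fun q hq => hg.analyticAt (norm_diagPt_lt hq.1 (mem_closedBall_zero_iff.1 hq.2))
  have hG : AnalyticOnNhd ℂ (fun q => g (diagPt (m + 1) q))
      (diagDomain m ×ˢ Metric.closedBall 0 3) := fun q hq =>
    (hga q hq).fun_comp ((diagPt (m + 1)).analyticAt q)
  have hD : AnalyticOnNhd ℂ (fun q => wedgeTerm (firstIntegral κ) g v v' (diagPt (m + 1) q))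
      (diagDomain m ×ˢ Metric.closedBall 0 3) := fun q hq => by
    have hfst : (diagPt (m + 1) q).1 ∈ Metric.ball 0 2 := by
      rw [diagPt_apply q.1]
      exact Metric.ball_subset_ball (by norm_num) hq.1.1
    exact (analyticAt_wedgeTerm (hκ.analyticOnNhd_firstIntegral _ hfst) (hga q hq) v v').fun_comp
      ((diagPt (m + 1)).analyticAt q)
  have hpt : diagPt (m + 1) ((b, w), 0) = (b, w) := by simp [diagPt_apply]
  have hcont := eq_zero_of_eventually_eq_zero_of_convex (isOpen_diagDomain m)
    ((convex_ball _ _).prod (convex_ball _ _)) hG hD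
    (fun y hy t ht => hg.diagPt_ne_zero hy (mem_sphere_zero_iff_norm.1 ht))
    (basePt_mem_diagDomain m) (hκ.eventually_wedgeTerm_diagPt_eq_zero hg v v') (y := (b, w))
    ⟨mem_ball_zero_iff.2 hb, mem_ball_zero_iff.2 hw⟩ (Metric.mem_ball_self three_pos)
  rw [hpt] at hcont
  exact hcont hzero

end IsSolution

theorem LeviNearProdSum.exists_firstIntegral (hg : LeviNearProdSum m g) :
    ∃ h : (Fin (m + 1) → ℂ) → ℂ, AnalyticOnNhd ℂ h (Metric.ball 0 2) ∧
      (∃ b ∈ Metric.ball 0 2, fderiv ℂ h b ≠ 0) ∧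
      ∀ b w, ‖b‖ < 3 / 2 → ‖w‖ < 1 / 4 → g (b, w) = 0 → ∀ v v', wedgeTerm h g v v' (b, w) = 0 := by
  obtain ⟨κ, hκ⟩ := hg.exists_isSolution
  exact ⟨firstIntegral κ, hκ.analyticOnNhd_firstIntegral,
    ⟨basePt m, mem_ball_zero_iff.2 (norm_lt_two_of_mem_baseRegion (basePt_mem_baseRegion m)),
      hκ.fderiv_firstIntegral_basePt_ne_zero hg.toNearProdSum⟩,
    fun b w hb hw hzero => hκ.wedgeTerm_eq_zero_of_norm_lt hg hb hw hzero⟩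

end Continuation

section ConjGraphDerivatives

open Complex

variable {n : ℕ} {Φ : (Fin n → ℂ) × (Fin n → ℂ) → ℂ} {φ : (Fin n → ℂ) → ℂ} {F : (Fin n → ℂ) → ℝ}
  {p : Fin n → ℂ}

lemma hasFDerivAt_comp_mk_star (hΦ : DifferentiableAt ℂ Φ (p, star p)) :
    HasFDerivAt (𝕜 := ℝ) (fun z => Φ (z, star z))
      (((fderiv ℂ Φ (p, star p)).restrictScalars ℝ).comp
        ((ContinuousLinearMap.id ℝ (Fin n → ℂ)).prod
          (starL' ℝ : (Fin n → ℂ) ≃L[ℝ] (Fin n → ℂ)).toContinuousLinearMap)) p :=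
  HasFDerivAt.comp (f := fun z : Fin n → ℂ => (z, star z)) p
    (hΦ.hasFDerivAt.restrictScalars ℝ) ((hasFDerivAt_id p).prodMk
      (starL' ℝ : (Fin n → ℂ) ≃L[ℝ] (Fin n → ℂ)).toContinuousLinearMap.hasFDerivAt)

lemma fderiv_eq_add_of_eventuallyEq_mk_star (hφ : φ =ᶠ[𝓝 p] fun z => Φ (z, star z))
    (hΦ : DifferentiableAt ℂ Φ (p, star p)) (v : Fin n → ℂ) :
    fderiv ℝ φ p v = fderiv ℂ Φ (p, star p) (v, 0) + fderiv ℂ Φ (p, star p) (0, star v) := by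
  rw [hφ.fderiv_eq, (hasFDerivAt_comp_mk_star hΦ).fderiv, ← map_add]
  simp

lemma fderiv_I_smul_of_eventuallyEq_mk_star (hφ : φ =ᶠ[𝓝 p] fun z => Φ (z, star z))
    (hΦ : DifferentiableAt ℂ Φ (p, star p)) (v : Fin n → ℂ) :
    fderiv ℝ φ p (I • v) =
      I * (fderiv ℂ Φ (p, star p) (v, 0) - fderiv ℂ Φ (p, star p) (0, star v)) := by
  rw [fderiv_eq_add_of_eventuallyEq_mk_star hφ hΦ, ← map_add, ← map_sub, ← smul_eq_mul, ← map_smul]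
  simp [star_smul]

lemma two_mul_fderiv_inl (hφ : φ =ᶠ[𝓝 p] fun z => Φ (z, star z))
    (hΦ : DifferentiableAt ℂ Φ (p, star p)) (v : Fin n → ℂ) :
    2 * fderiv ℂ Φ (p, star p) (v, 0) = fderiv ℝ φ p v - I * fderiv ℝ φ p (I • v) := by
  rw [fderiv_I_smul_of_eventuallyEq_mk_star hφ hΦ, fderiv_eq_add_of_eventuallyEq_mk_star hφ hΦ,
    ← mul_assoc, I_mul_I]
  ring

lemma two_mul_fderiv_inr_star (hφ : φ =ᶠ[𝓝 p] fun z => Φ (z, star z))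
    (hΦ : DifferentiableAt ℂ Φ (p, star p)) (v : Fin n → ℂ) :
    2 * fderiv ℂ Φ (p, star p) (0, star v) = fderiv ℝ φ p v + I * fderiv ℝ φ p (I • v) := by
  rw [fderiv_I_smul_of_eventuallyEq_mk_star hφ hΦ, fderiv_eq_add_of_eventuallyEq_mk_star hφ hΦ,
    ← mul_assoc, I_mul_I]
  ring

lemma single_I (j : Fin n) : (Pi.single j I : Fin n → ℂ) = I • Pi.single j 1 := by
  rw [← Pi.single_smul, smul_eq_mul, mul_one]

lemma wirtZ_eq_fderiv_inl (hφ : φ =ᶠ[𝓝 p] fun z => Φ (z, star z))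
    (hΦ : DifferentiableAt ℂ Φ (p, star p)) (j : Fin n) :
    wirtZ φ j p = fderiv ℂ Φ (p, star p) (Pi.single j 1, 0) := by
  rw [wirtZ, single_I, ← two_mul_fderiv_inl hφ hΦ, mul_div_cancel_left₀ _ two_ne_zero]

lemma wirtZbar_eq_fderiv_inr (hφ : φ =ᶠ[𝓝 p] fun z => Φ (z, star z))
    (hΦ : DifferentiableAt ℂ Φ (p, star p)) (j : Fin n) :
    wirtZbar φ j p = fderiv ℂ Φ (p, star p) (0, Pi.single j 1) := by
  rw [wirtZbar, single_I, ← two_mul_fderiv_inr_star hφ hΦ, mul_div_cancel_left₀ _ two_ne_zero,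
    ← Pi.single_star, star_one]

lemma wirtZbar_wirtZ_eq_fderiv_fderiv (hφ : φ =ᶠ[𝓝 p] fun z => Φ (z, star z))
    (hΦ : AnalyticAt ℂ Φ (p, star p)) (i j : Fin n) :
    wirtZbar (wirtZ φ i) j p =
      fderiv ℂ (fderiv ℂ Φ) (p, star p) (0, Pi.single j 1) (Pi.single i 1, 0) := by
  have hcont : ContinuousAt (fun z : Fin n → ℂ => (z, star z)) p := by fun_prop
  have hwirtZ : wirtZ φ i =ᶠ[𝓝 p] fun z => fderiv ℂ Φ (z, star z) (Pi.single i 1, 0) := by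
    filter_upwards [hφ.eventuallyEq_nhds, hcont.eventually hΦ.eventually_analyticAt] with z hz hΦz
      using wirtZ_eq_fderiv_inl hz hΦz.differentiableAt i
  have hderiv := hΦ.fderiv.differentiableAt.hasFDerivAt.clm_apply
    (hasFDerivAt_const ((Pi.single i 1, 0) : (Fin n → ℂ) × (Fin n → ℂ)) (p, star p))
  rw [wirtZbar_eq_fderiv_inr (Φ := fun q => fderiv ℂ Φ q (Pi.single i 1, 0)) hwirtZ
    hderiv.differentiableAt, hderiv.fderiv]
  simp

lemma ofReal_fderiv (hF : (fun z => (F z : ℂ)) =ᶠ[𝓝 p] fun z => Φ (z, star z))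
    (hΦ : DifferentiableAt ℂ Φ (p, star p)) (v : Fin n → ℂ) :
    (fderiv ℝ F p v : ℂ) = fderiv ℝ (fun z => (F z : ℂ)) p v := by
  have hdiff : DifferentiableAt ℝ F p := by
    have hre := reCLM.differentiableAt.comp p
      (hF.differentiableAt_iff.2 (hasFDerivAt_comp_mk_star hΦ).differentiableAt)
    simpa [Function.comp_def] using hre
  exact (DFunLike.congr_fun (ofRealCLM.hasFDerivAt.comp p hdiff.hasFDerivAt).fderiv v).symm

lemma fderiv_inr_star_eq_star (hF : (fun z => (F z : ℂ)) =ᶠ[𝓝 p] fun z => Φ (z, star z))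
    (hΦ : DifferentiableAt ℂ Φ (p, star p)) (v : Fin n → ℂ) :
    fderiv ℂ Φ (p, star p) (0, star v) = star (fderiv ℂ Φ (p, star p) (v, 0)) := by
  have hinl := two_mul_fderiv_inl hF hΦ v
  have hinr := two_mul_fderiv_inr_star hF hΦ v
  rw [← ofReal_fderiv hF hΦ, ← ofReal_fderiv hF hΦ] at hinl hinr
  refine mul_left_cancel₀ (two_ne_zero (α := ℂ)) ?_
  have hstar := congrArg star hinl
  simp only [star_mul', star_sub, star_def, conj_ofReal, conj_I, map_ofNat] at hstar
  rw [star_def, hstar, hinr]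
  ring

lemma fderiv_ne_zero_of_fderiv_inl_ne_zero
    (hF : (fun z => (F z : ℂ)) =ᶠ[𝓝 p] fun z => Φ (z, star z))
    (hΦ : DifferentiableAt ℂ Φ (p, star p)) {v : Fin n → ℂ}
    (hv : fderiv ℂ Φ (p, star p) (v, 0) ≠ 0) : fderiv ℝ F p ≠ 0 := by
  intro hzero
  have hinl := two_mul_fderiv_inl hF hΦ v
  simp only [← ofReal_fderiv hF hΦ, hzero, zero_apply, ofReal_zero, mul_zero, sub_zero] at hinl
  exact hv ((mul_eq_zero_iff_left two_ne_zero).1 hinl)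

end ConjGraphDerivatives

section LeviForm

open Complex

variable {n : ℕ}

lemma sum_apply_single_mul (L : (Fin n → ℂ) →L[ℂ] ℂ) (v : Fin n → ℂ) :
    ∑ i, L (Pi.single i 1) * v i = L v := by
  conv_rhs => rw [pi_eq_sum_univ' v, map_sum]
  refine Finset.sum_congr rfl fun i _ => ?_
  rw [map_smul, smul_eq_mul, mul_comm]

lemma sum_sum_apply_single_mul
    (B : (Fin n → ℂ) × (Fin n → ℂ) →L[ℂ] (Fin n → ℂ) × (Fin n → ℂ) →L[ℂ] ℂ) (v w : Fin n → ℂ) :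
    ∑ i, ∑ j, B (0, Pi.single j 1) (Pi.single i 1, 0) * v i * w j = B (0, w) (v, 0) := by
  have hinner : ∀ i, ∑ j, B (0, Pi.single j 1) (Pi.single i 1, 0) * w j =
      B (0, w) (Pi.single i 1, 0) := fun i =>
    sum_apply_single_mul ((B.flip (Pi.single i 1, 0)).comp (ContinuousLinearMap.inr ℂ _ _)) w
  have houter : ∑ i, B (0, w) (Pi.single i 1, 0) * v i = B (0, w) (v, 0) :=
    sum_apply_single_mul ((B (0, w)).comp (ContinuousLinearMap.inl ℂ _ _)) v
  rw [← houter]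
  refine Finset.sum_congr rfl fun i _ => ?_
  rw [← hinner, Finset.sum_mul]
  exact Finset.sum_congr rfl fun j _ => mul_right_comm _ _ _

lemma apply_inr_star_inl_eq_zero_of_diag {E : Type*} [NormedAddCommGroup E] [NormedSpace ℂ E]
    [StarAddMonoid E] [StarModule ℂ E] (B : E × E →L[ℂ] E × E →L[ℂ] ℂ) (L : E →L[ℂ] ℂ)
    (hdiag : ∀ v, L v = 0 → B (0, star v) (v, 0) = 0) {u v : E} (hu : L u = 0) (hv : L v = 0) :
    B (0, star v) (u, 0) = 0 := by
  have hinr : ∀ (c : ℂ) (x y : E), ((0 : E), x + c • y) = (0, x) + c • (0, y) := by simp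
  have hinl : ∀ (c : ℂ) (x y : E), (x + c • y, (0 : E)) = (x, 0) + c • (y, 0) := by simp
  have hcross : ∀ c : ℂ, c * B (0, star u) (v, 0) + star c * B (0, star v) (u, 0) = 0 := by
    intro c
    have hc := hdiag (u + c • v) (by simp [hu, hv])
    rw [star_add, star_smul, hinr, hinl] at hc
    simp only [map_add, map_smul, add_apply, smul_apply, smul_eq_mul, hdiag u hu, hdiag v hv] at hc
    linear_combination hc
  have hone := hcross 1
  have hI := hcross I
  simp only [star_one, star_def, conj_I] at hone hI
  linear_combination (1 / 2) * hone + (I / 2) * hI +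
    (- B (0, star u) (v, 0) / 2 + B (0, star v) (u, 0) / 2) * I_mul_I

lemma tendsto_mk_star_zero : Tendsto (fun z : Fin n → ℂ => (z, star z)) (𝓝 0) (𝓝 0) := by
  have hcont : Continuous fun z : Fin n → ℂ => (z, star z) := by fun_prop
  simpa only [star_zero, Prod.mk_zero_zero] using hcont.tendsto 0

lemma LeviFlatGerm.eventually_isPolarLeviFlatAt {F : (Fin n → ℂ) → ℝ}
    {FC : (Fin n → ℂ) × (Fin n → ℂ) → ℂ} (hLF : LeviFlatGerm F) (hFC : IsComplexification F FC) :
    ∀ᶠ z in 𝓝 (0 : Fin n → ℂ), IsPolarLeviFlatAt FC z := by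
  filter_upwards [hLF, tendsto_mk_star_zero.eventually hFC.1.eventually_analyticAt,
    EventuallyEq.eventuallyEq_nhds (EventuallyEq.symm hFC.2)] with p hlevi han hF
  rintro hzero ⟨v₀, hv₀⟩ ⟨u, _⟩ ⟨_, w⟩ rfl rfl hu hw
  have hdF := fderiv_ne_zero_of_fderiv_inl_ne_zero hF han.differentiableAt hv₀
  have hFp : F p = 0 := ofReal_eq_zero.1 (hF.self_of_nhds.trans hzero)
  let L := (fderiv ℂ FC (p, star p)).comp (ContinuousLinearMap.inl ℂ (Fin n → ℂ) (Fin n → ℂ))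
  have hdiag : ∀ v, L v = 0 → fderiv ℂ (fderiv ℂ FC) (p, star p) (0, star v) (v, 0) = 0 := by
    intro v hv
    simp only [wirtZ_eq_fderiv_inl hF han.differentiableAt,
      wirtZbar_wirtZ_eq_fderiv_fderiv hF han] at hlevi
    exact (sum_sum_apply_single_mul _ v (star v)).symm.trans
      (hlevi hFp hdF v ((sum_apply_single_mul L v).trans hv))
  have hLw : L (star w) = 0 := by
    have hstar := fderiv_inr_star_eq_star hF han.differentiableAt (star w)
    rw [star_star, hw] at hstar
    exact star_eq_zero.1 hstar.symm
  simpa only [star_star] using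
    apply_inr_star_inl_eq_zero_of_diag (fderiv ℂ (fderiv ℂ FC) (p, star p)) L hdiag hu hLw

end LeviForm

section Rescale

variable {n : ℕ} {FC : (Fin n → ℂ) × (Fin n → ℂ) → ℂ} {F H : (Fin n → ℂ) → ℝ} {s : ℝ}

/-- The rescaling of `FC` under which the homogeneous part `prodSum / 2` of degree `n` becomes
`prodSum` and the terms of higher degree tend to `0` with `s`. -/
noncomputable def rescale (FC : (Fin n → ℂ) × (Fin n → ℂ) → ℂ) (s : ℝ)
    (p : (Fin n → ℂ) × (Fin n → ℂ)) : ℂ :=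
  (2 / (s : ℂ) ^ n) • FC ((s : ℂ) • p)

lemma two_div_pow_ne_zero (hs : 0 < s) : (2 / (s : ℂ) ^ n) ≠ 0 :=
  div_ne_zero two_ne_zero (pow_ne_zero _ (Complex.ofReal_ne_zero.2 hs.ne'))

lemma rescale_eq_zero_iff (hs : 0 < s) {p : (Fin n → ℂ) × (Fin n → ℂ)} :
    rescale FC s p = 0 ↔ FC ((s : ℂ) • p) = 0 :=
  smul_eq_zero_iff_right (two_div_pow_ne_zero hs)

lemma fderiv_const_smul_comp_smul {E G : Type*} [NormedAddCommGroup E] [NormedSpace ℂ E]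
    [NormedAddCommGroup G] [NormedSpace ℂ G] (Φ : E → G) (c r : ℂ) (p : E) :
    fderiv ℂ (fun q => c • Φ (r • q)) p = (c * r) • fderiv ℂ Φ (r • p) := by
  rw [mul_smul, ← fderiv_comp_smul r]
  exact congrFun (fderiv_const_smul_field c) p

lemma fderiv_rescale (p : (Fin n → ℂ) × (Fin n → ℂ)) :
    fderiv ℂ (rescale FC s) p = (2 / (s : ℂ) ^ n * s) • fderiv ℂ FC ((s : ℂ) • p) :=
  fderiv_const_smul_comp_smul _ _ _ _

lemma fderiv_fderiv_rescale (p : (Fin n → ℂ) × (Fin n → ℂ)) :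
    fderiv ℂ (fderiv ℂ (rescale FC s)) p =
      (2 / (s : ℂ) ^ n * s * s) • fderiv ℂ (fderiv ℂ FC) ((s : ℂ) • p) := by
  have hfun : fderiv ℂ (rescale FC s) =
      fun q => (2 / (s : ℂ) ^ n * s) • fderiv ℂ FC ((s : ℂ) • q) := funext fderiv_rescale
  rw [hfun]
  exact fderiv_const_smul_comp_smul (fderiv ℂ FC) _ _ p

lemma analyticAt_rescale {p : (Fin n → ℂ) × (Fin n → ℂ)} (h : AnalyticAt ℂ FC ((s : ℂ) • p)) :
    AnalyticAt ℂ (rescale FC s) p :=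
  (h.fun_comp (f := fun q => (s : ℂ) • q) analyticAt_id.fun_const_smul).fun_const_smul

lemma prodSum_smul (c : ℂ) (p : (Fin n → ℂ) × (Fin n → ℂ)) :
    prodSum (c • p) = c ^ n * prodSum p := by
  simp [prodSum, Finset.prod_mul_distrib, mul_add]

lemma norm_rescale_sub_prodSum_le (hs : 0 < s) {C R : ℝ} (hC : 0 ≤ C)
    {p : (Fin n → ℂ) × (Fin n → ℂ)} (hp : ‖p‖ ≤ R)
    (hle : ‖FC ((s : ℂ) • p) - prodSum ((s : ℂ) • p) / 2‖ ≤ C * ‖(s : ℂ) • p‖ ^ (n + 1)) :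
    ‖rescale FC s p - prodSum p‖ ≤ s * (2 * C * R ^ (n + 1)) := by
  have hs' : (s : ℂ) ≠ 0 := Complex.ofReal_ne_zero.2 hs.ne'
  have hnorm : ‖(s : ℂ)‖ = s := RCLike.norm_of_nonneg hs.le
  have hsub : rescale FC s p - prodSum p =
      2 / (s : ℂ) ^ n * (FC ((s : ℂ) • p) - prodSum ((s : ℂ) • p) / 2) := by
    rw [rescale, prodSum_smul, smul_eq_mul]
    field_simp
  calc ‖rescale FC s p - prodSum p‖
      = 2 / s ^ n * ‖FC ((s : ℂ) • p) - prodSum ((s : ℂ) • p) / 2‖ := by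
        rw [hsub, norm_mul, norm_div, norm_pow, hnorm, Complex.norm_two]
    _ ≤ 2 / s ^ n * (C * (s * R) ^ (n + 1)) := by
        rw [norm_smul, hnorm] at hle
        gcongr
        exact hle.trans (by gcongr)
    _ = s * (2 * C * R ^ (n + 1)) := by rw [mul_pow, pow_succ s]; field_simp

lemma smul_mk_star (s : ℝ) (z : Fin n → ℂ) :
    (s : ℂ) • (z, star z) = ((s : ℂ) • z, star ((s : ℂ) • z)) := by
  simp [star_smul]

lemma im_rescale_mk_star {z : Fin n → ℂ} (h : (FC ((s : ℂ) • z, star ((s : ℂ) • z))).im = 0) :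
    (rescale FC s (z, star z)).im = 0 := by
  have hreal : (2 / (s : ℂ) ^ n) = ((2 / s ^ n : ℝ) : ℂ) := by push_cast; rfl
  rw [rescale, smul_mk_star, smul_eq_mul, hreal, Complex.im_ofReal_mul, h, mul_zero]

lemma IsPolarLeviFlatAt.rescale (hs : 0 < s) {z : Fin n → ℂ}
    (h : IsPolarLeviFlatAt FC ((s : ℂ) • z)) : IsPolarLeviFlatAt (rescale FC s) z := by
  have hc : (2 / (s : ℂ) ^ n * s) ≠ 0 :=
    mul_ne_zero (two_div_pow_ne_zero hs) (Complex.ofReal_ne_zero.2 hs.ne')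
  rintro hzero ⟨v, hv⟩ a b ha hb hga hgb
  rw [rescale_eq_zero_iff hs, smul_mk_star] at hzero
  rw [fderiv_rescale, smul_mk_star, smul_apply, smul_ne_zero_iff_right hc] at hv
  rw [fderiv_rescale, smul_mk_star, smul_apply, smul_eq_zero_iff_right hc] at hga hgb
  rw [fderiv_fderiv_rescale, smul_mk_star, smul_apply, smul_apply,
    h hzero ⟨v, hv⟩ a b ha hb hga hgb, smul_zero]

lemma eventually_forall_norm_lt_smul {E : Type*} [NormedAddCommGroup E] [NormedSpace ℂ E]
    {P : E → Prop} (hP : ∀ᶠ p in 𝓝 0, P p) (R : ℝ) :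
    ∀ᶠ s : ℝ in 𝓝 0, ∀ p : E, ‖p‖ < R → P ((s : ℂ) • p) := by
  have habs := (NormedSpace.isVonNBounded_ball ℂ E R hP).eventually_nhds_zero (mem_of_mem_nhds hP)
  filter_upwards [(Complex.continuous_ofReal.tendsto' 0 0 Complex.ofReal_zero).eventually habs]
    with s hs p hp using hs (mem_ball_zero_iff.2 hp)

lemma analyticAt_prodSum (p : (Fin n → ℂ) × (Fin n → ℂ)) : AnalyticAt ℂ prodSum p := by
  refine AnalyticAt.fun_add ?_ ?_ <;> refine Finset.analyticAt_fun_prod _ fun i _ => ?_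
  · exact ((ContinuousLinearMap.proj (R := ℂ) (φ := fun _ : Fin n => ℂ) i).comp
      (ContinuousLinearMap.fst ℂ _ _)).analyticAt p
  · exact ((ContinuousLinearMap.proj (R := ℂ) (φ := fun _ : Fin n => ℂ) i).comp
      (ContinuousLinearMap.snd ℂ _ _)).analyticAt p

lemma IsComplexification.sub_prodSum_isBigO (hFC : IsComplexification F FC)
    (hFeq : ∀ᶠ z in 𝓝 (0 : Fin n → ℂ), F z = (∏ i, z i).re + H z)
    (hHord : (fun z : Fin n → ℂ => H z) =O[𝓝 0] fun z => ‖z‖ ^ (n + 1)) :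
    (fun q => FC q - prodSum q / 2) =O[𝓝 0] fun q => ‖q‖ ^ (n + 1) := by
  refine isBigO_pow_norm_of_conj
    (hFC.1.fun_sub ((analyticAt_prodSum 0).fun_div analyticAt_const two_ne_zero)) ?_
  have hHord' : (fun z => (H z : ℂ)) =O[𝓝 0] fun z : Fin n → ℂ => ‖z‖ ^ (n + 1) :=
    (hHord.norm_left.congr_left fun z => (Complex.norm_real _).symm).of_norm_left
  refine hHord'.congr' ?_ EventuallyEq.rfl
  filter_upwards [hFeq, hFC.2] with z hF hFCz
  rw [hFCz, hF, prodSum_mk_star]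
  push_cast
  ring

lemma IsComplexification.eventually_norm_rescale_sub_prodSum_le (hFC : IsComplexification F FC)
    (hFeq : ∀ᶠ z in 𝓝 (0 : Fin n → ℂ), F z = (∏ i, z i).re + H z)
    (hHord : (fun z : Fin n → ℂ => H z) =O[𝓝 0] fun z => ‖z‖ ^ (n + 1)) {R ε : ℝ} (hε : 0 < ε) :
    ∀ᶠ s in 𝓝[>] (0 : ℝ), ∀ p, ‖p‖ < R → ‖rescale FC s p - prodSum p‖ ≤ ε := by
  obtain ⟨C, hC, hbound⟩ := (hFC.sub_prodSum_isBigO hFeq hHord).exists_pos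
  have hsmall : ∀ᶠ s in 𝓝 (0 : ℝ), s * (2 * C * R ^ (n + 1)) < ε :=
    ((continuous_mul_const _).tendsto' 0 0 (zero_mul _)).eventually_lt_const hε
  filter_upwards [self_mem_nhdsWithin, nhdsWithin_le_nhds hsmall,
    nhdsWithin_le_nhds (eventually_forall_norm_lt_smul hbound.bound R)] with s hs hsε hle p hp
  refine (norm_rescale_sub_prodSum_le hs hC.le hp.le ?_).trans hsε.le
  simpa only [norm_pow, norm_norm] using hle p hp

end Rescale

section FirstIntegral

variable {m : ℕ} {F H : (Fin (m + 1) → ℂ) → ℝ}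
  {FC : (Fin (m + 1) → ℂ) × (Fin (m + 1) → ℂ) → ℂ}

lemma IsComplexification.eventually_leviNearProdSum_rescale (hFC : IsComplexification F FC)
    (hFeq : ∀ᶠ z in 𝓝 (0 : Fin (m + 1) → ℂ), F z = (∏ i, z i).re + H z)
    (hHord : (fun z : Fin (m + 1) → ℂ => H z) =O[𝓝 0] fun z => ‖z‖ ^ (m + 1 + 1))
    (hLF : LeviFlatGerm F) : ∀ᶠ s in 𝓝[>] (0 : ℝ), LeviNearProdSum m (rescale FC s) := by
  have hreal : ∀ᶠ z in 𝓝 (0 : Fin (m + 1) → ℂ), (FC (z, star z)).im = 0 := by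
    filter_upwards [hFC.2] with z hz
    rw [hz, Complex.ofReal_im]
  let R : ℝ := 4 ^ (m + 1) + 2
  filter_upwards [self_mem_nhdsWithin,
    nhdsWithin_le_nhds (eventually_forall_norm_lt_smul hFC.1.eventually_analyticAt R),
    hFC.eventually_norm_rescale_sub_prodSum_le (R := R) (ε := (1 / 4) ^ (m + 1)) hFeq hHord
      (by positivity),
    nhdsWithin_le_nhds (eventually_forall_norm_lt_smul hreal R),
    nhdsWithin_le_nhds (eventually_forall_norm_lt_smul (hLF.eventually_isPolarLeviFlatAt hFC) R)]
    with s hs han hnear him hlevi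
  exact {
    analytic := fun p hp => analyticAt_rescale (han p (mem_ball_zero_iff.1 hp))
    norm_sub_le := fun p hp => hnear p (mem_ball_zero_iff.1 hp)
    im_eq_zero := fun z hz => im_rescale_mk_star (him z hz)
    levi := fun z hz => (hlevi z hz).rescale hs }

lemma eventually_exists_zero_above
    (hnear : ∀ᶠ s in 𝓝[>] (0 : ℝ), NearProdSum m (rescale FC s))
    {P : (Fin (m + 1) → ℂ) × (Fin (m + 1) → ℂ) → Prop} (hP : ∀ᶠ p in 𝓝 0, P p) :
    ∀ᶠ z in 𝓝 (0 : Fin (m + 1) → ℂ), ∃ w, FC (z, w) = 0 ∧ P (z, w) := by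
  obtain ⟨s, ⟨hg, hPs⟩, hs⟩ := ((hnear.and ((eventually_forall_norm_lt_smul hP
    (4 ^ (m + 1) + 1)).filter_mono nhdsWithin_le_nhds)).and self_mem_nhdsWithin).exists
  have hs' : (s : ℂ) ≠ 0 := Complex.ofReal_ne_zero.2 (ne_of_gt hs)
  have hball : ∀ᶠ z in 𝓝 (0 : Fin (m + 1) → ℂ), ‖(s : ℂ)⁻¹ • z‖ < 2 := by
    have hcont : Continuous fun z : Fin (m + 1) → ℂ => ‖(s : ℂ)⁻¹ • z‖ := by fun_prop
    exact (hcont.tendsto' 0 0 (by simp)).eventually_lt_const two_pos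
  filter_upwards [hball] with z hz
  have hy : ((s : ℂ)⁻¹ • z, 1) ∈ paramDomain m :=
    ⟨mem_ball_zero_iff.2 hz, one_mem_polyAnn m⟩
  obtain ⟨u, hu, hzero⟩ := hg.exists_zero hy
  have hmk : (s : ℂ) • ((s : ℂ)⁻¹ • z, consL m (u, 1)) = (z, (s : ℂ) • consL m (u, 1)) := by
    rw [Prod.smul_mk, smul_inv_smul₀ hs']
  refine ⟨(s : ℂ) • consL m (u, 1), ?_, ?_⟩
  · rwa [rescale_eq_zero_iff hs, hmk] at hzero
  · rw [← hmk]
    have hlt := norm_mk_consL_lt hy (hu.trans (lt_add_one _))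
    exact hPs _ hlt

lemma wedgeTerm_rescale {n : ℕ} (h : (Fin n → ℂ) → ℂ) (FC : (Fin n → ℂ) × (Fin n → ℂ) → ℂ)
    (s : ℝ) (v v' : Fin n → ℂ) (q : (Fin n → ℂ) × (Fin n → ℂ)) :
    wedgeTerm (fun b => h ((s : ℂ) • b)) (rescale FC s) v v' q =
      2 / (s : ℂ) ^ n * s * s * wedgeTerm h FC v v' ((s : ℂ) • q) := by
  simp only [wedgeTerm, fderiv_rescale, fderiv_comp_smul, smul_apply, smul_eq_mul, Prod.smul_fst]
  ring

lemma not_eventually_eq_const_of_fderiv_ne_zero {E : Type*} [NormedAddCommGroup E]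
    [NormedSpace ℂ E] {h : E → ℂ} {U : Set E} (hh : AnalyticOnNhd ℂ h U) (hU : IsOpen U)
    (hUc : IsPreconnected U) {x y : E} (hx : x ∈ U) (hy : y ∈ U) (hdh : fderiv ℂ h y ≠ 0) (c : ℂ) :
    ¬ ∀ᶠ z in 𝓝 x, h z = c := by
  intro hc
  have heq := hh.eqOn_of_preconnected_of_eventuallyEq analyticOnNhd_const hUc hx hc
  have heq' : h =ᶠ[𝓝 y] fun _ => c := heq.eventuallyEq_of_mem (hU.mem_nhds hy)
  exact hdh (by rw [heq'.fderiv_eq, fderiv_const_apply])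

lemma exists_firstIntegral_of_rescale {s : ℝ} (hs : 0 < s)
    (hg : LeviNearProdSum m (rescale FC s)) :
    ∃ k : (Fin (m + 1) → ℂ) → ℂ, AnalyticAt ℂ k 0 ∧ (∀ c, ¬ ∀ᶠ z in 𝓝 0, k z = c) ∧
      ∀ᶠ p in 𝓝 0, FC p = 0 → ∀ v v', wedgeTerm k FC v v' p = 0 := by
  obtain ⟨h, hh, ⟨b, hb, hdh⟩, hwedge⟩ := hg.exists_firstIntegral
  have hs' : (s : ℂ) ≠ 0 := Complex.ofReal_ne_zero.2 hs.ne'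
  refine ⟨fun z => h ((s : ℂ)⁻¹ • z), ?_, fun c hc => ?_, ?_⟩
  · exact AnalyticAt.fun_comp (f := fun z : Fin (m + 1) → ℂ => (s : ℂ)⁻¹ • z)
      (hh _ (by simp)) analyticAt_id.fun_const_smul
  · refine not_eventually_eq_const_of_fderiv_ne_zero hh Metric.isOpen_ball
      (convex_ball 0 2).isPreconnected (Metric.mem_ball_self two_pos) hb hdh c ?_
    have hlim := (continuous_const_smul (s : ℂ)).tendsto' (0 : Fin (m + 1) → ℂ) 0 (smul_zero _)
    simpa only [inv_smul_smul₀ hs'] using hlim.eventually hc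
  · have hlim := (continuous_const_smul (s : ℂ)⁻¹).tendsto'
      (0 : (Fin (m + 1) → ℂ) × (Fin (m + 1) → ℂ)) 0 (smul_zero _)
    filter_upwards [hlim (Metric.ball_mem_nhds 0 (ε := 1 / 4) (by norm_num))]
      with p hp hzero v v'
    obtain ⟨q, rfl⟩ : ∃ q, (s : ℂ) • q = p := ⟨_, smul_inv_smul₀ hs' p⟩
    rw [Set.mem_preimage, inv_smul_smul₀ hs', mem_ball_zero_iff] at hp
    have hq := hwedge q.1 q.2 (by linarith [norm_fst_le q]) (by linarith [norm_snd_le q])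
      ((rescale_eq_zero_iff hs).2 hzero) v v'
    have hscaled := wedgeTerm_rescale (fun z => h ((s : ℂ)⁻¹ • z)) FC s v v' q
    simp only [inv_smul_smul₀ hs'] at hscaled
    rw [hscaled] at hq
    exact (mul_eq_zero_iff_left (mul_ne_zero (mul_ne_zero (two_div_pow_ne_zero hs) hs') hs')).1 hq

end FirstIntegral

theorem stmt_7_general (n : ℕ) (hn : 0 < n) (F H : (Fin n → ℂ) → ℝ)
    (hFeq : ∀ᶠ z in 𝓝 (0 : Fin n → ℂ), F z = (∏ i, z i).re + H z)
    (hHord : (fun z : Fin n → ℂ => H z) =O[𝓝 0] fun z => ‖z‖ ^ (n + 1))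
    (hLF : LeviFlatGerm F)
    (FC : ((Fin n → ℂ) × (Fin n → ℂ)) → ℂ) (hFC : IsComplexification F FC) :
    ∃ h : ((Fin n → ℂ) × (Fin n → ℂ)) → ℂ, AnalyticAt ℂ h 0 ∧
      (¬ ∃ c : ℂ, ∀ᶠ p in 𝓝 (0 : (Fin n → ℂ) × (Fin n → ℂ)), FC p = 0 → h p = c) ∧
      (∀ᶠ p in 𝓝 (0 : (Fin n → ℂ) × (Fin n → ℂ)), FC p = 0 → fderiv ℂ FC p ≠ 0 →
        ∀ u v : (Fin n → ℂ) × (Fin n → ℂ),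
          fderiv ℂ FC p u = 0 → fderiv ℂ FC p v = 0 →
          fderiv ℂ h p u * fderiv ℂ FC p (v.1, 0) -
            fderiv ℂ h p v * fderiv ℂ FC p (u.1, 0) = 0) := by
  obtain ⟨m, rfl⟩ := Nat.exists_eq_add_one.2 hn
  have hlevi := hFC.eventually_leviNearProdSum_rescale hFeq hHord hLF
  obtain ⟨s, hg, hs⟩ := (hlevi.and self_mem_nhdsWithin).exists
  obtain ⟨k, hk, hknc, hwedge⟩ := exists_firstIntegral_of_rescale hs hg
  refine ⟨fun p => k p.1, hk.comp_of_eq analyticAt_fst rfl, ?_, ?_⟩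
  · rintro ⟨c, hc⟩
    have hnear := hlevi.mono fun s hs => hs.toNearProdSum
    exact hknc c ((eventually_exists_zero_above hnear hc).mono fun z ⟨_, hzero, hz⟩ => hz hzero)
  · filter_upwards [hwedge, continuousAt_fst.eventually hk.eventually_analyticAt]
      with p hp hkp hzero _ u v _ _
    have hfst := hkp.differentiableAt.hasFDerivAt.comp p hasFDerivAt_fst
    rw [show (fun p => k p.1) = k ∘ Prod.fst from rfl, hfst.fderiv]
    exact hp hzero u.1 v.1

/-- **Proposition (for Theorem 3).** For `M = {Re(z₁⋯zₙ) + O(|z|^{n+1}) = 0}`, `n ≥ 3`,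
with `Sing(M_ℂ)` the union of the subspaces `V_{ijkℓ}` and contained in the closure of
`Sing(L_ℂ)`, the complexified Levi foliation `L_ℂ` admits a non-constant holomorphic
first integral. -/
theorem stmt_7 (n : ℕ) (hn : 3 ≤ n) (F H : (Fin n → ℂ) → ℝ)
    (hF : AnalyticAt ℝ F 0) (hH : AnalyticAt ℝ H 0)
    -- `F(z) = Re(z₁ ⋯ zₙ) + H(z, z̄)` with `H = O(|z|^{n+1})`
    (hFeq : ∀ᶠ z in 𝓝 (0 : Fin n → ℂ), F z = (∏ i, z i).re + H z)
    (hHord : (fun z : Fin n → ℂ => H z) =O[𝓝 0] fun z => ‖z‖ ^ (n + 1))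
    -- `M = {F = 0}` is a singular hypersurface at `0`
    (hF0 : F 0 = 0) (hsing : fderiv ℝ F 0 = 0)
    (hirr : IrreducibleRGerm F)
    (hLF : LeviFlatGerm F)
    (FC : ((Fin n → ℂ) × (Fin n → ℂ)) → ℂ) (hFC : IsComplexification F FC)
    -- `Sing(M_ℂ)` is the union of the subspaces `V_{ijkℓ} = {z_i = z_j = w_k = w_ℓ = 0}`
    (hSingMC : ∀ᶠ p in 𝓝 (0 : (Fin n → ℂ) × (Fin n → ℂ)),
      (p ∈ singMC FC ↔ ∃ i j k l : Fin n, i < j ∧ k < l ∧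
        p.1 i = 0 ∧ p.1 j = 0 ∧ p.2 k = 0 ∧ p.2 l = 0))
    -- `Sing(M_ℂ)` is contained in the closure of `Sing(L_ℂ)`
    (hcl : ∃ U ∈ 𝓝 (0 : (Fin n → ℂ) × (Fin n → ℂ)),
      singMC FC ∩ U ⊆ closure (singLC FC)) :
    ∃ h : ((Fin n → ℂ) × (Fin n → ℂ)) → ℂ, AnalyticAt ℂ h 0 ∧
      -- `h` is non-constant along `M_ℂ`
      (¬ ∃ c : ℂ, ∀ᶠ p in 𝓝 (0 : (Fin n → ℂ) × (Fin n → ℂ)), FC p = 0 → h p = c) ∧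
      -- `dh(p) ∧ α(p)` vanishes on pairs of vectors in `T_p M_ℂ`, for `p ∈ M*_ℂ`
      (∀ᶠ p in 𝓝 (0 : (Fin n → ℂ) × (Fin n → ℂ)), FC p = 0 → fderiv ℂ FC p ≠ 0 →
        ∀ u v : (Fin n → ℂ) × (Fin n → ℂ),
          fderiv ℂ FC p u = 0 → fderiv ℂ FC p v = 0 →
          fderiv ℂ h p u * fderiv ℂ FC p (v.1, 0) -
            fderiv ℂ h p v * fderiv ℂ FC p (u.1, 0) = 0) :=
  stmt_7_general n (by omega) F H hFeq hHord hLF FC hFC
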